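/- Let A = (A_1,…,A_n) be a nonnegative vector in ℝ^n, D = n + A_1 + ⋯ + A_n, 1 ≤ p < D, and p_* = Dp/(D−p). Then for every continuously differentiable function u : ℝ^n → ℝ with compact support, ( ∫_{ℝ^n} x^A |u|^{p_*} dx )^{1/p_*} ≤ K ( ∫_{ℝ^n} x^A |∇u|^p dx )^{1/p}, where the integrals are over all of ℝ^n, K = 2^{1/D} C_{p,n,A} if 1 ≤ p < D/2, and K = C_{p,n,A} if D/2 ≤ p < D. -/

import Mathlib

open MeasureTheory Real Filter

noncomputable section

/-- The positivity region `ℝ^n_A = {x : x_i > 0 whenever A_i > 0}`. -/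
def monSet {ι : Type*} [Fintype ι] (A : ι → ℝ) : Set (EuclideanSpace ℝ ι) :=
  {x | ∀ i, 0 < A i → 0 < x i}

/-- The monomial weight `x^A = ∏ |x_i|^{A_i}`. -/
def monWeight {ι : Type*} [Fintype ι] (A : ι → ℝ) (x : EuclideanSpace ℝ ι) : ℝ :=
  ∏ i, |x i| ^ A i

/-- The homogeneous dimension `D = n + A_1 + ⋯ + A_n`. -/
def monDim {ι : Type*} [Fintype ι] (A : ι → ℝ) : ℝ :=
  (Fintype.card ι : ℝ) + ∑ i, A i

/-- `k = #{i : A_i > 0}`. -/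
def monK {ι : Type*} [Fintype ι] (A : ι → ℝ) : ℕ :=
  Nat.card {i : ι // 0 < A i}

/-- `Π(A) = [ (∏ Γ((A_i+1)/2)) / 2^k ]^{2/D}`. -/
def monPi {ι : Type*} [Fintype ι] (A : ι → ℝ) : ℝ :=
  ((∏ i, Gamma ((A i + 1) / 2)) / 2 ^ monK A) ^ (2 / monDim A)

/-- `C_{1,n,A}`, the sharp constant for `p = 1`. -/
def monC1 {ι : Type*} [Fintype ι] (A : ι → ℝ) : ℝ :=
  (monDim A)⁻¹ *
    ((2 ^ monK A * Gamma (1 + monDim A / 2)) / ∏ i, Gamma ((A i + 1) / 2)) ^ (1 / monDim A)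

/-- `C_{p,n,A}`, the sharp constant for `1 ≤ p < D`. -/
def monCp {ι : Type*} [Fintype ι] (A : ι → ℝ) (p : ℝ) : ℝ :=
  if p = 1 then monC1 A
  else
    monC1 A * monDim A ^ (1 - 1 / p - 1 / monDim A) *
      ((p - 1) / (monDim A - p)) ^ (1 / (p / (p - 1))) *
      (p / (p - 1) * Gamma (monDim A) /
        (Gamma (monDim A / p) * Gamma (monDim A / (p / (p - 1))))) ^ (1 / monDim A)

/-!
On the cone where `x_i > 0` for all `i` with `A_i > 0`, the measure `x^A dx` is log-concave and
homogeneous of degree `D`. Homogeneity upgrades the Prékopa–Leindler inequality to a Brunn–Minkowski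
inequality with exponent `1 / D`, so, within the cone, balls centred at the origin minimise the
perimeter. Rearranging the level sets of `u` into such balls hence does not increase the Dirichlet
integral (Pólya and Szegő), and there remains Bliss's inequality for decreasing functions and the
weight `r ^ (D - 1)`, proved by transporting one density to the extremal one. A Gaussian integral
gives the measure of the unit ball, and `p = 1` is the limit `p → 1`.

Almost every point of the space lies in exactly one reflected copy of the cone. Since
`ℓ^p ⊆ ℓ^q` with norm one for `p ≤ q`, the inequalities on these copies add up without any loss in
the constant.
-/

open Set
open scoped ENNReal NNReal Topology Pointwise

section BrunnMinkowskiReal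

lemma volume_add_volume_le_volume_add_of_isCompact {K L : Set ℝ} (hK : IsCompact K)
    (hL : IsCompact L) (hK0 : K.Nonempty) (hL0 : L.Nonempty) :
    volume K + volume L ≤ volume (K + L) := by
  obtain ⟨a, haK, ha⟩ := hK.exists_isGreatest hK0
  obtain ⟨b, hbL, hb⟩ := hL.exists_isLeast hL0
  -- The translates `K + b` and `a + L` lie in `K + L` and meet only at `a + b`.
  have hKb : volume ((· + -b) ⁻¹' K) = volume K := measure_preimage_add_right _ _ _
  have hLa : volume ((· + -a) ⁻¹' L) = volume L := measure_preimage_add_right _ _ _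
  rw [← hKb, ← hLa, ← measure_union₀]
  · apply measure_mono
    rintro x (hx | hx)
    · exact ⟨x + -b, hx, b, hbL, by simp⟩
    · exact ⟨a, haK, x + -a, hx, by simp⟩
  · exact (hL.measurableSet.preimage (measurable_id.add_const _)).nullMeasurableSet
  · refine measure_mono_null (t := {a + b}) ?_ (by simp)
    rintro x ⟨hxK, hxL⟩
    have h₁ := ha hxK
    have h₂ := hb hxL
    rw [mem_singleton_iff]
    linarith

lemma volume_add_volume_le_volume_add {S T : Set ℝ} (hS : MeasurableSet S)
    (hT : MeasurableSet T) (hS0 : S.Nonempty) (hT0 : T.Nonempty) :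
    volume S + volume T ≤ volume (S + T) := by
  obtain ⟨a, ha⟩ := hS0
  obtain ⟨b, hb⟩ := hT0
  rw [hS.measure_eq_iSup_isCompact, hT.measure_eq_iSup_isCompact]
  simp only [iSup_and']
  refine ENNReal.biSup_add_biSup_le' ⟨∅, empty_subset _, isCompact_empty⟩
    ⟨∅, empty_subset _, isCompact_empty⟩ ?_
  rintro K ⟨hKS, hK⟩ L ⟨hLT, hL⟩
  calc volume K + volume L ≤ volume (insert a K) + volume (insert b L) :=
        add_le_add (measure_mono (subset_insert a K)) (measure_mono (subset_insert b L))
    _ ≤ volume (insert a K + insert b L) :=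
        volume_add_volume_le_volume_add_of_isCompact (hK.insert a) (hL.insert b)
          (insert_nonempty a K) (insert_nonempty b L)
    _ ≤ volume (S + T) :=
        measure_mono (add_subset_add (insert_subset ha hKS) (insert_subset hb hLT))

end BrunnMinkowskiReal

section PrekopaLeindlerReal

lemma volume_ofReal_lt_inter_Ioi (a : ℝ≥0∞) :
    volume ({s : ℝ | ENNReal.ofReal s < a} ∩ Ioi 0) = a := by
  rcases eq_or_ne a ∞ with rfl | ha
  · simp
  · have : {s : ℝ | ENNReal.ofReal s < a} ∩ Ioi 0 = Ioo 0 a.toReal := by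
      ext s
      exact ⟨fun ⟨h, h0⟩ => ⟨h0, (ENNReal.ofReal_lt_iff_lt_toReal (le_of_lt h0) ha).1 h⟩,
        fun ⟨h0, h⟩ => ⟨(ENNReal.ofReal_lt_iff_lt_toReal h0.le ha).2 h, h0⟩⟩
    rw [this, Real.volume_Ioo, sub_zero, ENNReal.ofReal_toReal ha]

lemma lintegral_eq_lintegral_meas_ofReal_lt {α : Type*} [MeasurableSpace α] (μ : Measure α)
    [SFinite μ] {f : α → ℝ≥0∞} (hf : Measurable f) :
    ∫⁻ x, f x ∂μ = ∫⁻ s in Ioi (0 : ℝ), μ {x | ENNReal.ofReal s < f x} := by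
  have hm : MeasurableSet {z : α × ℝ | ENNReal.ofReal z.2 < f z.1} :=
    measurableSet_lt (ENNReal.measurable_ofReal.comp measurable_snd) (hf.comp measurable_fst)
  have hsection (x : α) : f x = volume.restrict (Ioi 0) {s : ℝ | ENNReal.ofReal s < f x} := by
    rw [Measure.restrict_apply (measurableSet_lt ENNReal.measurable_ofReal measurable_const),
      volume_ofReal_lt_inter_Ioi]
  calc ∫⁻ x, f x ∂μ
      = ∫⁻ x, volume.restrict (Ioi 0) {s : ℝ | ENNReal.ofReal s < f x} ∂μ :=
        lintegral_congr hsection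
    _ = (μ.prod (volume.restrict (Ioi 0))) {z : α × ℝ | ENNReal.ofReal z.2 < f z.1} :=
        (Measure.prod_apply hm).symm
    _ = ∫⁻ s in Ioi (0 : ℝ), μ {x | ENNReal.ofReal s < f x} := Measure.prod_apply_symm hm

lemma ennreal_geom_mean_le_arith_mean2_weighted {a b : ℝ≥0∞} {t : ℝ} (h0 : 0 < t) (h1 : t < 1) :
    a ^ (1 - t) * b ^ t ≤ ENNReal.ofReal (1 - t) * a + ENNReal.ofReal t * b := by
  have h1' : 0 < 1 - t := sub_pos.2 h1
  rcases eq_or_ne a ∞ with rfl | ha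
  · rw [ENNReal.mul_top (by simpa using h1), top_add]; exact le_top
  rcases eq_or_ne b ∞ with rfl | hb
  · rw [ENNReal.mul_top (by simpa using h0), add_top]; exact le_top
  lift a to ℝ≥0 using ha
  lift b to ℝ≥0 using hb
  have := NNReal.geom_mean_le_arith_mean2_weighted (1 - t).toNNReal t.toNNReal a b
    (by rw [← Real.toNNReal_add h1'.le h0.le, sub_add_cancel, Real.toNNReal_one])
  rw [Real.coe_toNNReal _ h1'.le, Real.coe_toNNReal _ h0.le] at this
  rw [← ENNReal.coe_rpow_of_nonneg _ h1'.le, ← ENNReal.coe_rpow_of_nonneg _ h0.le,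
    ENNReal.ofReal, ENNReal.ofReal]
  exact_mod_cast this

lemma antitone_meas_ofReal_lt {α : Type*} [MeasurableSpace α] (μ : Measure α) (f : α → ℝ≥0∞) :
    Antitone fun s : ℝ => μ {x | ENNReal.ofReal s < f x} := fun _ _ hst =>
  measure_mono fun _ hx => (ENNReal.ofReal_le_ofReal hst).trans_lt hx

variable {t : ℝ} {f g h : ℝ → ℝ≥0∞}

lemma add_volume_superlevel_le (h0 : 0 < t) (h1 : t < 1) (hf : Measurable f) (hg : Measurable g)
    (H : ∀ x y, f x ^ (1 - t) * g y ^ t ≤ h ((1 - t) * x + t * y)) {a : ℝ≥0∞}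
    (haf : a < ⨆ x, f x) (hag : a < ⨆ x, g x) :
    ENNReal.ofReal (1 - t) * volume {x | a < f x} + ENNReal.ofReal t * volume {x | a < g x} ≤
      volume {x | a < h x} := by
  have h1' : 0 < 1 - t := sub_pos.2 h1
  have volume_smul {c : ℝ} (hc : 0 < c) (S : Set ℝ) :
      ENNReal.ofReal c * volume S = volume (c • S) := by
    rw [Measure.addHaar_smul, Module.finrank_self, pow_one, abs_of_pos hc]
  obtain ⟨x₀, hx₀⟩ := lt_iSup_iff.1 haf
  obtain ⟨y₀, hy₀⟩ := lt_iSup_iff.1 hag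
  rw [volume_smul h1', volume_smul h0]
  refine (volume_add_volume_le_volume_add
    ((measurableSet_lt measurable_const hf).const_smul_of_ne_zero h1'.ne')
    ((measurableSet_lt measurable_const hg).const_smul_of_ne_zero h0.ne')
    ⟨_, smul_mem_smul_set hx₀⟩ ⟨_, smul_mem_smul_set hy₀⟩).trans (measure_mono ?_)
  rintro _ ⟨_, ⟨x, hx, rfl⟩, _, ⟨y, hy, rfl⟩, rfl⟩
  calc a = a ^ (1 - t) * a ^ t := by
        rw [← ENNReal.rpow_add_of_nonneg _ _ h1'.le h0.le, sub_add_cancel, ENNReal.rpow_one]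
    _ < f x ^ (1 - t) * g y ^ t :=
        ENNReal.mul_lt_mul (ENNReal.rpow_lt_rpow hx h1') (ENNReal.rpow_lt_rpow hy h0)
    _ ≤ h ((1 - t) * x + t * y) := H x y

lemma prekopaLeindler_real_of_iSup_eq_one (h0 : 0 < t) (h1 : t < 1) (hf : Measurable f)
    (hg : Measurable g) (hh : Measurable h) (hfs : ⨆ x, f x = 1) (hgs : ⨆ x, g x = 1)
    (H : ∀ x y, f x ^ (1 - t) * g y ^ t ≤ h ((1 - t) * x + t * y)) :
    (∫⁻ x, f x) ^ (1 - t) * (∫⁻ x, g x) ^ t ≤ ∫⁻ x, h x := by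
  refine (ennreal_geom_mean_le_arith_mean2_weighted h0 h1).trans ?_
  have hmeas (k : ℝ → ℝ≥0∞) := (antitone_meas_ofReal_lt volume k).measurable
  rw [lintegral_eq_lintegral_meas_ofReal_lt _ hf, lintegral_eq_lintegral_meas_ofReal_lt _ hg,
    lintegral_eq_lintegral_meas_ofReal_lt _ hh, ← lintegral_const_mul _ (hmeas f),
    ← lintegral_const_mul _ (hmeas g), ← lintegral_add_left ((hmeas f).const_mul _)]
  refine setLIntegral_mono (hmeas h) fun s _ => ?_
  rcases lt_or_ge s 1 with hs | hs
  · have hs' : ENNReal.ofReal s < 1 := ENNReal.ofReal_lt_one.2 hs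
    exact add_volume_superlevel_le h0 h1 hf hg H (hs'.trans_eq hfs.symm) (hs'.trans_eq hgs.symm)
  · have hempty {k : ℝ → ℝ≥0∞} (hk : ⨆ x, k x = 1) : {x | ENNReal.ofReal s < k x} = ∅ :=
      eq_empty_of_forall_notMem fun x => not_lt.2 <|
        (le_iSup k x).trans (hk.trans_le (ENNReal.one_le_ofReal.2 hs))
    simp [hempty hfs, hempty hgs]

lemma prekopaLeindler_real_of_iSup_ne_top (h0 : 0 < t) (h1 : t < 1) (hf : Measurable f)
    (hg : Measurable g) (hh : Measurable h) (hfb : ⨆ x, f x ≠ ∞) (hgb : ⨆ x, g x ≠ ∞)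
    (H : ∀ x y, f x ^ (1 - t) * g y ^ t ≤ h ((1 - t) * x + t * y)) :
    (∫⁻ x, f x) ^ (1 - t) * (∫⁻ x, g x) ^ t ≤ ∫⁻ x, h x := by
  have h1' : 0 < 1 - t := sub_pos.2 h1
  rcases eq_or_ne (⨆ x, f x) 0 with ha | ha
  · simp [ENNReal.iSup_eq_zero.1 ha, h1']
  rcases eq_or_ne (⨆ x, g x) 0 with hb | hb
  · simp [ENNReal.iSup_eq_zero.1 hb, h0]
  set a := ⨆ x, f x
  set b := ⨆ x, g x
  set c := a⁻¹ ^ (1 - t) * b⁻¹ ^ t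
  have hc0 : c ≠ 0 := by
    refine mul_ne_zero ?_ ?_ <;> simp [ENNReal.rpow_eq_zero_iff, hfb, hgb, h0.not_gt, h1.not_gt]
  have hct : c ≠ ∞ := by
    refine ENNReal.mul_ne_top ?_ ?_ <;> apply ENNReal.rpow_ne_top_of_nonneg <;>
      simp [h1'.le, h0.le, ha, hb]
  have mul_rpow_mul_mul_rpow (x y : ℝ≥0∞) :
      (a⁻¹ * x) ^ (1 - t) * (b⁻¹ * y) ^ t = c * (x ^ (1 - t) * y ^ t) := by
    rw [ENNReal.mul_rpow_of_nonneg _ _ h1'.le, ENNReal.mul_rpow_of_nonneg _ _ h0.le,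
      mul_mul_mul_comm]
  have hnorm := prekopaLeindler_real_of_iSup_eq_one h0 h1 (hf.const_mul a⁻¹) (hg.const_mul b⁻¹)
    (hh.const_mul c) (by rw [← ENNReal.mul_iSup, ENNReal.inv_mul_cancel ha hfb])
    (by rw [← ENNReal.mul_iSup, ENNReal.inv_mul_cancel hb hgb])
    fun x y => by rw [mul_rpow_mul_mul_rpow]; exact mul_le_mul_right (H x y) c
  rw [lintegral_const_mul _ hf, lintegral_const_mul _ hg, lintegral_const_mul _ hh,
    mul_rpow_mul_mul_rpow] at hnorm
  exact (ENNReal.mul_le_mul_iff_right hc0 hct).1 hnorm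

lemma tendsto_lintegral_min_natCast {α : Type*} [MeasurableSpace α] (μ : Measure α)
    {f : α → ℝ≥0∞} (hf : Measurable f) :
    Tendsto (fun N : ℕ => ∫⁻ x, min (f x) N ∂μ) atTop (𝓝 (∫⁻ x, f x ∂μ)) := by
  refine lintegral_tendsto_of_tendsto_of_monotone
    (fun N => (hf.min measurable_const).aemeasurable)
    (Eventually.of_forall fun x m n hmn => min_le_min_left _ (Nat.cast_le.2 hmn))
    (Eventually.of_forall fun x => ?_)
  simpa using (tendsto_const_nhds (x := f x)).min ENNReal.tendsto_nat_nhds_top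

lemma prekopaLeindler_real (h0 : 0 < t) (h1 : t < 1) (hf : Measurable f) (hg : Measurable g)
    (hh : Measurable h) (H : ∀ x y, f x ^ (1 - t) * g y ^ t ≤ h ((1 - t) * x + t * y)) :
    (∫⁻ x, f x) ^ (1 - t) * (∫⁻ x, g x) ^ t ≤ ∫⁻ x, h x := by
  have h1' : 0 < 1 - t := sub_pos.2 h1
  rcases eq_or_ne (∫⁻ x, f x) 0 with hf0 | hf0
  · simp [hf0, h1']
  rcases eq_or_ne (∫⁻ x, g x) 0 with hg0 | hg0
  · simp [hg0, h0]
  have hlim := ENNReal.Tendsto.mul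
    ((tendsto_lintegral_min_natCast volume hf).ennrpow_const (1 - t))
    (Or.inl (by simp [ENNReal.rpow_eq_zero_iff, hf0, h1.not_gt]))
    ((tendsto_lintegral_min_natCast volume hg).ennrpow_const t)
    (Or.inl (by simp [ENNReal.rpow_eq_zero_iff, hg0, h0.not_gt]))
  have hbdd (k : ℝ → ℝ≥0∞) (N : ℕ) : ⨆ x, min (k x) (N : ℝ≥0∞) ≠ ∞ :=
    ne_top_of_le_ne_top (ENNReal.natCast_ne_top N) (iSup_le fun x => min_le_right _ _)
  refine le_of_tendsto' hlim fun N => ?_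
  refine prekopaLeindler_real_of_iSup_ne_top h0 h1 (hf.min measurable_const)
    (hg.min measurable_const) hh (hbdd f N) (hbdd g N) fun x y => le_trans ?_ (H x y)
  gcongr <;> exact min_le_left _ _

end PrekopaLeindlerReal

section LogConcave

variable {E F : Type*} [AddCommGroup E] [Module ℝ E] [MeasurableSpace E]
  [AddCommGroup F] [Module ℝ F] [MeasurableSpace F]

/-- Log-concave measures, defined by the validity of the Prékopa–Leindler inequality. The usual
inequality between measures of sets is the case of indicator functions; the functional form is
the one that passes to products. -/
def IsLogConcave (μ : Measure E) : Prop :=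
  ∀ ⦃t : ℝ⦄, 0 < t → t < 1 → ∀ ⦃f g h : E → ℝ≥0∞⦄, Measurable f → Measurable g → Measurable h →
    (∀ x y, f x ^ (1 - t) * g y ^ t ≤ h ((1 - t) • x + t • y)) →
      (∫⁻ x, f x ∂μ) ^ (1 - t) * (∫⁻ x, g x ∂μ) ^ t ≤ ∫⁻ x, h x ∂μ

namespace IsLogConcave

variable {μ : Measure E} {ν : Measure F}

lemma volume_real : IsLogConcave (volume : Measure ℝ) :=
  fun _ h0 h1 _ _ _ hf hg hh H => prekopaLeindler_real h0 h1 hf hg hh H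

lemma dirac (a : E) : IsLogConcave (Measure.dirac a) := by
  intro t _ _ f g h hf hg hh H
  rw [lintegral_dirac' a hf, lintegral_dirac' a hg, lintegral_dirac' a hh]
  refine (H a a).trans_eq ?_
  rw [← add_smul, sub_add_cancel, one_smul]

lemma map (hμ : IsLogConcave μ) (L : E →ₗ[ℝ] F) (hL : Measurable L) :
    IsLogConcave (μ.map L) := by
  intro t h0 h1 f g h hf hg hh H
  rw [lintegral_map hf hL, lintegral_map hg hL, lintegral_map hh hL]
  refine hμ h0 h1 (hf.comp hL) (hg.comp hL) (hh.comp hL) fun x y => ?_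
  rw [map_add, map_smul, map_smul]
  exact H (L x) (L y)

lemma prod [SFinite ν] (hμ : IsLogConcave μ) (hν : IsLogConcave ν) :
    IsLogConcave (μ.prod ν) := by
  intro t h0 h1 f g h hf hg hh H
  rw [lintegral_prod _ hf.aemeasurable, lintegral_prod _ hg.aemeasurable,
    lintegral_prod _ hh.aemeasurable]
  exact hμ h0 h1 hf.lintegral_prod_right' hg.lintegral_prod_right' hh.lintegral_prod_right'
    fun x x' => hν h0 h1 (hf.comp measurable_prodMk_left) (hg.comp measurable_prodMk_left)
      (hh.comp measurable_prodMk_left) fun y y' => H (x, y) (x', y')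

lemma volume_pi_fin : ∀ n : ℕ, IsLogConcave (volume : Measure (Fin n → ℝ))
  | 0 => by
    rw [volume_pi, Measure.pi_of_empty _ 0]
    exact dirac 0
  | n + 1 => by
    have hcons : ⇑(Fin.consLinearEquiv ℝ fun _ : Fin (n + 1) => ℝ).toLinearMap =
        (MeasurableEquiv.piFinSuccAbove (fun _ : Fin (n + 1) => ℝ) 0).symm := by
      ext z i
      simp [MeasurableEquiv.piFinSuccAbove]
    rw [← (volume_preserving_piFinSuccAbove (fun _ : Fin (n + 1) => ℝ) 0).symm.map_eq, ← hcons]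
    refine (volume_real.prod (volume_pi_fin n)).map _ ?_
    rw [hcons]
    exact MeasurableEquiv.measurable _

lemma volume_innerProductSpace (V : Type*) [NormedAddCommGroup V] [InnerProductSpace ℝ V]
    [FiniteDimensional ℝ V] [MeasurableSpace V] [BorelSpace V] :
    IsLogConcave (volume : Measure V) := by
  have hmp := (stdOrthonormalBasis ℝ V).measurePreserving_repr_symm.comp
    (PiLp.volume_preserving_toLp (Fin (Module.finrank ℝ V)))
  rw [← hmp.map_eq]
  exact (volume_pi_fin _).map ((WithLp.linearEquiv 2 ℝ _).symm.trans
    (stdOrthonormalBasis ℝ V).repr.symm.toLinearEquiv).toLinearMap hmp.measurable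

lemma withDensity (hμ : IsLogConcave μ) {w : E → ℝ≥0∞} (hw : Measurable w)
    (hlog : ∀ ⦃t : ℝ⦄, 0 < t → t < 1 → ∀ x y, w x ^ (1 - t) * w y ^ t ≤ w ((1 - t) • x + t • y)) :
    IsLogConcave (μ.withDensity w) := by
  intro t h0 h1 f g h hf hg hh H
  rw [lintegral_withDensity_eq_lintegral_mul μ hw hf,
    lintegral_withDensity_eq_lintegral_mul μ hw hg, lintegral_withDensity_eq_lintegral_mul μ hw hh]
  refine hμ h0 h1 (hw.mul hf) (hw.mul hg) (hw.mul hh) fun x y => ?_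
  simp only [Pi.mul_apply]
  rw [ENNReal.mul_rpow_of_nonneg _ _ (sub_pos.2 h1).le, ENNReal.mul_rpow_of_nonneg _ _ h0.le,
    mul_mul_mul_comm]
  exact mul_le_mul' (hlog h0 h1 x y) (H x y)

lemma measure_rpow_mul_le (hμ : IsLogConcave μ) {t : ℝ} (h0 : 0 < t) (h1 : t < 1) {K L S : Set E}
    (hK : MeasurableSet K) (hL : MeasurableSet L) (hS : MeasurableSet S)
    (H : ∀ x ∈ K, ∀ y ∈ L, (1 - t) • x + t • y ∈ S) : μ K ^ (1 - t) * μ L ^ t ≤ μ S := by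
  simpa only [lintegral_indicator_one, hK, hL, hS] using
    hμ h0 h1 (f := K.indicator 1) (g := L.indicator 1) (h := S.indicator 1)
      (measurable_one.indicator hK) (measurable_one.indicator hL) (measurable_one.indicator hS)
      fun x y => by
        by_cases hx : x ∈ K
        · by_cases hy : y ∈ L
          · simp [hx, hy, H x hx y hy]
          · simp [hy, h0]
        · simp [hx, h1]

end IsLogConcave

end LogConcave

section HomogeneousLogConcave

variable {E : Type*} [NormedAddCommGroup E] [MeasurableSpace E]

/-- The radius of the ball centred at the origin with the same measure as `S`, when `μ` is
homogeneous of degree `D`. -/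
def volumeRadius (μ : Measure E) (D : ℝ) (S : Set E) : ℝ :=
  (μ.real S / μ.real (Metric.ball 0 1)) ^ (1 / D)

lemma volumeRadius_nonneg (μ : Measure E) (D : ℝ) (S : Set E) : 0 ≤ volumeRadius μ D S :=
  rpow_nonneg (div_nonneg measureReal_nonneg measureReal_nonneg) _

variable [NormedSpace ℝ E]

/-- Log-concave measures `μ` that are homogeneous of degree `D > 0` and give the unit ball a finite
positive mass. The number `D` plays the role of the dimension in the sharp Sobolev inequality. -/
structure IsHomogeneousLogConcave (μ : Measure E) (D : ℝ) : Prop where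
  dim_pos : 0 < D
  isLogConcave : IsLogConcave μ
  measure_smul : ∀ ⦃c : ℝ⦄, 0 < c → ∀ ⦃S : Set E⦄, MeasurableSet S →
    μ (c • S) = ENNReal.ofReal (c ^ D) * μ S
  measure_unitBall_pos : 0 < μ (Metric.ball 0 1)
  measure_unitBall_lt_top : μ (Metric.ball 0 1) < ∞

namespace IsHomogeneousLogConcave

variable {μ : Measure E} {D : ℝ}

lemma measureReal_unitBall_pos (hμ : IsHomogeneousLogConcave μ D) :
    0 < μ.real (Metric.ball 0 1) :=
  ENNReal.toReal_pos hμ.measure_unitBall_pos.ne' hμ.measure_unitBall_lt_top.ne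

lemma volumeRadius_rpow_mul (hμ : IsHomogeneousLogConcave μ D) (S : Set E) :
    volumeRadius μ D S ^ D * μ.real (Metric.ball 0 1) = μ.real S := by
  have hβ := hμ.measureReal_unitBall_pos
  rw [volumeRadius, ← rpow_mul (div_nonneg measureReal_nonneg hβ.le),
    one_div_mul_cancel hμ.dim_pos.ne', rpow_one, div_mul_cancel₀ _ hβ.ne']

lemma measure_ne_zero_of_volumeRadius_pos (hμ : IsHomogeneousLogConcave μ D) {S : Set E}
    (h : 0 < volumeRadius μ D S) : μ S ≠ 0 := by
  intro h0
  simp [volumeRadius, measureReal_def, h0, zero_rpow (inv_ne_zero hμ.dim_pos.ne')] at h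

lemma volumeRadius_mono (hμ : IsHomogeneousLogConcave μ D) {S T : Set E} (h : S ⊆ T)
    (hT : μ T ≠ ∞) : volumeRadius μ D S ≤ volumeRadius μ D T :=
  rpow_le_rpow (div_nonneg measureReal_nonneg measureReal_nonneg)
    (div_le_div_of_nonneg_right (measureReal_mono h hT) measureReal_nonneg)
    (one_div_pos.2 hμ.dim_pos).le

variable [BorelSpace E]

lemma measure_ball (hμ : IsHomogeneousLogConcave μ D) {r : ℝ} (hr : 0 < r) :
    μ (Metric.ball 0 r) = ENNReal.ofReal (r ^ D) * μ (Metric.ball 0 1) := by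
  rw [← hμ.measure_smul hr Metric.isOpen_ball.measurableSet, smul_unitBall_of_pos hr]

lemma measure_lt_top (hμ : IsHomogeneousLogConcave μ D) {S : Set E}
    (hS : Bornology.IsBounded S) : μ S < ∞ := by
  obtain ⟨r, hr, hSr⟩ := hS.subset_ball_lt 0 0
  refine (measure_mono hSr).trans_lt ?_
  rw [hμ.measure_ball hr]
  exact ENNReal.mul_lt_top ENNReal.ofReal_lt_top hμ.measure_unitBall_lt_top

lemma le_volumeRadius_of_measure_ball_le (hμ : IsHomogeneousLogConcave μ D) {S : Set E}
    (hS : μ S ≠ ∞) {r : ℝ} (hr : 0 < r) (h : μ (Metric.ball 0 r) ≤ μ S) :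
    r ≤ volumeRadius μ D S := by
  have hβ := hμ.measureReal_unitBall_pos
  refine (rpow_le_rpow_iff hr.le (volumeRadius_nonneg _ _ _) hμ.dim_pos).1 ?_
  refine le_of_mul_le_mul_right ?_ hβ
  rw [hμ.volumeRadius_rpow_mul]
  refine le_trans (le_of_eq ?_) (ENNReal.toReal_mono hS h)
  rw [hμ.measure_ball hr, ENNReal.toReal_mul, ENNReal.toReal_ofReal (rpow_nonneg hr.le _),
    measureReal_def]

lemma volumeRadius_add_le (hμ : IsHomogeneousLogConcave μ D) {K S : Set E}
    (hK : MeasurableSet K) (hS : MeasurableSet S) (hK0 : μ K ≠ 0) (hSf : μ S ≠ ∞) {δ : ℝ}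
    (hδ : 0 < δ) (H : ∀ y ∈ K, ∀ x, ‖x - y‖ < δ → x ∈ S) :
    volumeRadius μ D K + δ ≤ volumeRadius μ D S := by
  have hKf : μ K ≠ ∞ :=
    ne_top_of_le_ne_top hSf (measure_mono fun y hy => H y hy y (by simpa))
  set a := volumeRadius μ D K
  set β := μ (Metric.ball (0 : E) 1)
  have ha : 0 < a :=
    rpow_pos_of_pos (div_pos (ENNReal.toReal_pos hK0 hKf) hμ.measureReal_unitBall_pos) _
  have has : 0 < a + δ := add_pos ha hδ
  have hKnorm : μ (a⁻¹ • K) = β := by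
    rw [hμ.measure_smul (inv_pos.2 ha) hK, ← ENNReal.ofReal_toReal hKf, ← measureReal_def,
      ← hμ.volumeRadius_rpow_mul, ← ENNReal.ofReal_mul (rpow_nonneg (inv_pos.2 ha).le _),
      ← mul_assoc, ← mul_rpow (inv_pos.2 ha).le ha.le, inv_mul_cancel₀ ha.ne', one_rpow, one_mul,
      measureReal_def, ENNReal.ofReal_toReal hμ.measure_unitBall_lt_top.ne]
  -- `S / (a + δ)` contains the convex combination of `K / a` and of the unit ball with weights
  -- `a / (a + δ)` and `δ / (a + δ)`, and both have measure `β`.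
  have hSnorm : β ≤ μ ((a + δ)⁻¹ • S) := by
    have hconv := hμ.isLogConcave.measure_rpow_mul_le (t := δ / (a + δ)) (by positivity)
      ((div_lt_one has).2 (by linarith)) (hK.const_smul_of_ne_zero (inv_ne_zero ha.ne'))
      (Metric.isOpen_ball (x := (0 : E)) (ε := 1)).measurableSet
      (hS.const_smul_of_ne_zero (inv_ne_zero has.ne')) ?_
    · rwa [hKnorm, ← ENNReal.rpow_add _ _ hμ.measure_unitBall_pos.ne'
        hμ.measure_unitBall_lt_top.ne, sub_add_cancel, ENNReal.rpow_one] at hconv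
    · rintro _ ⟨x, hx, rfl⟩ y hy
      rw [mem_ball_zero_iff] at hy
      refine ⟨x + δ • y, H x hx _ ?_, ?_⟩
      · rw [add_sub_cancel_left, norm_smul, Real.norm_of_nonneg hδ.le]
        exact mul_lt_of_lt_one_right hδ hy
      · simp only [smul_add, smul_smul]
        congr 2 <;> field_simp
        ring
  refine hμ.le_volumeRadius_of_measure_ball_le hSf has ?_
  calc μ (Metric.ball 0 (a + δ)) = ENNReal.ofReal ((a + δ) ^ D) * β := hμ.measure_ball has
    _ ≤ ENNReal.ofReal ((a + δ) ^ D) * μ ((a + δ)⁻¹ • S) := by gcongr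
    _ = μ S := by
      rw [← hμ.measure_smul has (hS.const_smul_of_ne_zero (inv_ne_zero has.ne')),
        smul_inv_smul₀ has.ne']

end IsHomogeneousLogConcave

end HomogeneousLogConcave

section RadialMeasure

/-- The measure `D r ^ (D - 1) dr` on `(0, ∞)`: the law of `‖x‖` under a measure that is
homogeneous of degree `D` and gives the unit ball mass one. -/
def radialMeasure (D : ℝ) : Measure ℝ :=
  (volume.restrict (Ioi 0)).withDensity fun r => ENNReal.ofReal (D * r ^ (D - 1))

instance (D : ℝ) : SFinite (radialMeasure D) := by unfold radialMeasure; infer_instance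

lemma ae_radialMeasure_pos (D : ℝ) : ∀ᵐ r ∂radialMeasure D, 0 < r :=
  (withDensity_absolutelyContinuous _ _).ae_le (ae_restrict_mem measurableSet_Ioi)

lemma ae_radialMeasure_of_ae (D : ℝ) {P : ℝ → Prop} (h : ∀ᵐ r, P r) :
    ∀ᵐ r ∂radialMeasure D, P r :=
  (withDensity_absolutelyContinuous _ _).ae_le (ae_restrict_of_ae h)

variable {D : ℝ}

lemma radialMeasure_Iio (hD : 0 < D) {R : ℝ} (hR : 0 ≤ R) :
    radialMeasure D (Iio R) = ENNReal.ofReal (R ^ D) := by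
  rw [radialMeasure, withDensity_apply _ measurableSet_Iio,
    Measure.restrict_restrict measurableSet_Iio, Iio_inter_Ioi, restrict_Ioo_eq_restrict_Ioc]
  have hi : IntervalIntegrable (fun r : ℝ => D * r ^ (D - 1)) volume 0 R :=
    (intervalIntegral.intervalIntegrable_rpow' (by linarith)).const_mul D
  rw [← ofReal_integral_eq_lintegral_ofReal hi.1, ← intervalIntegral.integral_of_le hR,
    intervalIntegral.integral_const_mul, integral_rpow (Or.inl (by linarith))]
  · congr 1
    rw [sub_add_cancel, zero_rpow hD.ne', sub_zero, mul_div_cancel₀ _ hD.ne']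
  · filter_upwards [ae_restrict_mem measurableSet_Ioc] with r hr
    exact mul_nonneg hD.le (rpow_nonneg hr.1.le _)

lemma radialMeasure_Iio_ne_top (hD : 0 < D) {R : ℝ} (hR : 0 ≤ R) :
    radialMeasure D (Iio R) ≠ ∞ := by
  rw [radialMeasure_Iio hD hR]
  exact ENNReal.ofReal_ne_top

lemma integral_radialMeasure (hD : 0 < D) (f : ℝ → ℝ) :
    ∫ r, f r ∂radialMeasure D = ∫ r in Ioi 0, D * r ^ (D - 1) * f r := by
  rw [radialMeasure, integral_withDensity_eq_integral_toReal_smul (by fun_prop)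
    (Eventually.of_forall fun _ => ENNReal.ofReal_lt_top)]
  refine setIntegral_congr_fun measurableSet_Ioi fun r (hr : 0 < r) => ?_
  rw [ENNReal.toReal_ofReal (mul_nonneg hD.le (rpow_nonneg hr.le _)), smul_eq_mul]

end RadialMeasure

section Rearrangement

variable {E : Type*} [NormedAddCommGroup E] [MeasurableSpace E]

/-- The decreasing rearrangement of `v` with respect to a measure homogeneous of degree `D`, as a
function of the radius: `{r > 0 | s < decreasingRearrangement μ D v r}` is the interval whose
length is the volume radius of `{x | s < v x}`. Taking `max r 0` makes it constant for `r ≤ 0`. -/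
def decreasingRearrangement (μ : Measure E) (D : ℝ) (v : E → ℝ) (r : ℝ) : ℝ :=
  sSup {s | 0 ≤ s ∧ max r 0 < volumeRadius μ D {x | s < v x}}

lemma decreasingRearrangement_nonneg (μ : Measure E) (D : ℝ) (v : E → ℝ) (r : ℝ) :
    0 ≤ decreasingRearrangement μ D v r :=
  Real.sSup_nonneg fun _ h => h.1

namespace IsHomogeneousLogConcave

variable [NormedSpace ℝ E] {μ : Measure E} {D : ℝ} {v : E → ℝ}

lemma measure_eq_radialMeasure_Iio (hμ : IsHomogeneousLogConcave μ D) {S : Set E}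
    (hS : μ S ≠ ∞) :
    μ S = μ (Metric.ball 0 1) * radialMeasure D (Iio (volumeRadius μ D S)) := by
  rw [radialMeasure_Iio hμ.dim_pos (volumeRadius_nonneg _ _ _),
    ← ENNReal.ofReal_toReal hμ.measure_unitBall_lt_top.ne, ← measureReal_def,
    ← ENNReal.ofReal_mul measureReal_nonneg, mul_comm, hμ.volumeRadius_rpow_mul,
    ofReal_measureReal hS]

lemma bddAbove_decreasingRearrangement (hμ : IsHomogeneousLogConcave μ D) (hv : Continuous v)
    (hs : HasCompactSupport v) (r : ℝ) :
    BddAbove {s | 0 ≤ s ∧ max r 0 < volumeRadius μ D {x | s < v x}} := by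
  obtain ⟨M, hM⟩ := (hs.isCompact_range hv).bddAbove
  refine ⟨M, fun s hsr => ?_⟩
  by_contra! hMs
  have hempty : {x | s < v x} = ∅ :=
    eq_empty_of_forall_notMem fun x hx => ((hM (mem_range_self x)).trans_lt hMs).not_gt hx
  refine hμ.measure_ne_zero_of_volumeRadius_pos ((le_max_right r 0).trans_lt hsr.2) ?_
  rw [hempty, measure_empty]

variable [BorelSpace E]

lemma measure_superlevel_ne_top (hμ : IsHomogeneousLogConcave μ D) (hs : HasCompactSupport v)
    {s : ℝ} (h0 : 0 ≤ s) : μ {x | s < v x} ≠ ∞ :=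
  ne_top_of_le_ne_top (hμ.measure_lt_top hs.isBounded).ne
    (measure_mono fun _ hx => subset_closure (h0.trans_lt hx).ne')

lemma volumeRadius_superlevel_antitone (hμ : IsHomogeneousLogConcave μ D)
    (hs : HasCompactSupport v) {s t : ℝ} (h0 : 0 ≤ s) (h : s ≤ t) :
    volumeRadius μ D {x | t < v x} ≤ volumeRadius μ D {x | s < v x} :=
  hμ.volumeRadius_mono (fun _ hx => h.trans_lt hx) (hμ.measure_superlevel_ne_top hs h0)

lemma exists_gt_lt_volumeRadius (hμ : IsHomogeneousLogConcave μ D) (hs : HasCompactSupport v)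
    {s r : ℝ} (h0 : 0 ≤ s) (h : r < volumeRadius μ D {x | s < v x}) :
    ∃ t > s, r < volumeRadius μ D {x | t < v x} := by
  have hU : {x | s < v x} = ⋃ k : ℕ, {x | s + 1 / ((k : ℝ) + 1) < v x} := by
    ext x
    simp only [mem_ofPred_eq, mem_iUnion]
    refine ⟨fun hx => ?_, fun ⟨k, hk⟩ => (lt_add_of_pos_right s Nat.one_div_pos_of_nat).trans hk⟩
    obtain ⟨k, hk⟩ := exists_nat_one_div_lt (sub_pos.2 hx)
    exact ⟨k, by linarith⟩
  have hmono : Monotone fun k : ℕ => {x | s + 1 / ((k : ℝ) + 1) < v x} := fun i j hij x hx =>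
    (add_le_add_right (Nat.one_div_le_one_div hij) s).trans_lt hx
  have hlim := tendsto_measure_iUnion_atTop (μ := μ) hmono
  rw [← hU] at hlim
  have hlimRadius : Tendsto (fun k : ℕ => volumeRadius μ D {x | s + 1 / ((k : ℝ) + 1) < v x}) atTop
      (𝓝 (volumeRadius μ D {x | s < v x})) :=
    (((ENNReal.tendsto_toReal (hμ.measure_superlevel_ne_top hs h0)).comp hlim).div_const
      _).rpow_const (Or.inr (one_div_pos.2 hμ.dim_pos).le)
  obtain ⟨k, hk⟩ := (hlimRadius.eventually (lt_mem_nhds h)).exists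
  exact ⟨_, lt_add_of_pos_right s Nat.one_div_pos_of_nat, hk⟩

lemma lt_decreasingRearrangement_iff (hμ : IsHomogeneousLogConcave μ D) (hv : Continuous v)
    (hs : HasCompactSupport v) {s r : ℝ} (h0 : 0 ≤ s) :
    s < decreasingRearrangement μ D v r ↔ max r 0 < volumeRadius μ D {x | s < v x} := by
  constructor
  · intro h
    have hne : {s | 0 ≤ s ∧ max r 0 < volumeRadius μ D {x | s < v x}}.Nonempty := by
      by_contra! hempty
      rw [decreasingRearrangement, hempty, Real.sSup_empty] at h
      exact h0.not_gt h
    obtain ⟨t, ht, hst⟩ := exists_lt_of_lt_csSup hne h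
    exact ht.2.trans_le (hμ.volumeRadius_superlevel_antitone hs h0 hst.le)
  · intro h
    obtain ⟨t, hst, ht⟩ := hμ.exists_gt_lt_volumeRadius hs h0 h
    exact hst.trans_le
      (le_csSup (hμ.bddAbove_decreasingRearrangement hv hs r) ⟨h0.trans hst.le, ht⟩)

lemma antitone_decreasingRearrangement (hμ : IsHomogeneousLogConcave μ D) (hv : Continuous v)
    (hs : HasCompactSupport v) : Antitone (decreasingRearrangement μ D v) := by
  intro a b hab
  by_contra! h
  have h0 := decreasingRearrangement_nonneg μ D v a
  have hb := (hμ.lt_decreasingRearrangement_iff hv hs h0).1 h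
  exact lt_irrefl _
    ((hμ.lt_decreasingRearrangement_iff hv hs h0).2 ((max_le_max_right 0 hab).trans_lt hb))

lemma measurable_decreasingRearrangement (hμ : IsHomogeneousLogConcave μ D) (hv : Continuous v)
    (hs : HasCompactSupport v) : Measurable (decreasingRearrangement μ D v) :=
  (hμ.antitone_decreasingRearrangement hv hs).measurable

lemma decreasingRearrangement_eq_zero (hμ : IsHomogeneousLogConcave μ D) (hv : Continuous v)
    (hs : HasCompactSupport v) {r : ℝ} (hr : volumeRadius μ D {x | 0 < v x} ≤ r) :
    decreasingRearrangement μ D v r = 0 := by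
  refine le_antisymm (le_of_not_gt fun h => ?_) (decreasingRearrangement_nonneg μ D v r)
  rw [hμ.lt_decreasingRearrangement_iff hv hs le_rfl] at h
  exact (hr.trans (le_max_left r 0)).not_gt h

/-- The rearrangement inequality behind both the Lipschitz bound and the Pólya–Szegő inequality:
if `w + c` dominates the sup-convolution of `v` over balls of radius `δ`, then so it does after
rearrangement. -/
lemma lt_volumeRadius_of_lt_decreasingRearrangement_sub (hμ : IsHomogeneousLogConcave μ D)
    (hv : Continuous v) (hs : HasCompactSupport v) {w : E → ℝ} (hw : Measurable w) {s c δ r : ℝ}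
    (hfin : μ {x | s < w x} ≠ ∞) (hsc : 0 ≤ s + c) (hδ : 0 ≤ δ)
    (H : ∀ x y, ‖x - y‖ ≤ δ → v y ≤ w x + c)
    (h : s + c < decreasingRearrangement μ D v (r - δ)) :
    r < volumeRadius μ D {x | s < w x} := by
  rw [hμ.lt_decreasingRearrangement_iff hv hs hsc, max_lt_iff] at h
  have hnhds : ∀ y ∈ {y | s + c < v y}, ∀ x, ‖x - y‖ ≤ δ → x ∈ {x | s < w x} :=
    fun y (hy : s + c < v y) x hxy => by
      have := H x y hxy
      simp only [mem_ofPred_eq]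
      linarith
  have hle : volumeRadius μ D {y | s + c < v y} + δ ≤ volumeRadius μ D {x | s < w x} := by
    rcases hδ.eq_or_lt with rfl | hδ
    · rw [add_zero]
      exact hμ.volumeRadius_mono (fun y hy => hnhds y hy y (by simp)) hfin
    · exact hμ.volumeRadius_add_le (measurableSet_lt measurable_const hv.measurable)
        (measurableSet_lt measurable_const hw) (hμ.measure_ne_zero_of_volumeRadius_pos h.2) hfin hδ
        fun y hy x hxy => hnhds y hy x hxy.le
  linarith [h.1]

lemma lipschitzWith_decreasingRearrangement (hμ : IsHomogeneousLogConcave μ D) {L : ℝ≥0}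
    (hv : LipschitzWith L v) (hs : HasCompactSupport v) :
    LipschitzWith L (decreasingRearrangement μ D v) := by
  have hanti := hμ.antitone_decreasingRearrangement hv.continuous hs
  refine LipschitzWith.of_le_add_mul L fun a b => ?_
  rcases le_total b a with hab | hab
  · exact (hanti hab).trans (le_add_of_nonneg_right (mul_nonneg L.coe_nonneg dist_nonneg))
  by_contra! h
  rw [Real.dist_eq, abs_sub_comm, abs_of_nonneg (sub_nonneg.2 hab)] at h
  have hδ : 0 ≤ b - a := sub_nonneg.2 hab
  set s := decreasingRearrangement μ D v b
  have hs0 : 0 ≤ s := decreasingRearrangement_nonneg μ D v b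
  have hLδ : 0 ≤ L * (b - a) := mul_nonneg L.coe_nonneg hδ
  have h0 := ((hμ.lt_decreasingRearrangement_iff hv.continuous hs (add_nonneg hs0 hLδ)).1 h)
  have hb : b < volumeRadius μ D {x | s < v x} :=
    hμ.lt_volumeRadius_of_lt_decreasingRearrangement_sub hv.continuous hs hv.continuous.measurable
      (hμ.measure_superlevel_ne_top hs hs0) (add_nonneg hs0 hLδ) hδ
      (fun x y hxy => by
        have hdist := hv.dist_le_mul y x
        rw [dist_comm y x, dist_eq_norm x y, Real.dist_eq] at hdist
        have := mul_le_mul_of_nonneg_left hxy L.coe_nonneg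
        linarith [le_abs_self (v y - v x)])
      (by rwa [sub_sub_cancel])
  refine lt_irrefl s ((hμ.lt_decreasingRearrangement_iff hv.continuous hs hs0).2 (max_lt hb ?_))
  exact ((le_max_right a 0).trans_lt h0).trans_le
    (hμ.volumeRadius_superlevel_antitone hs hs0 (le_add_of_nonneg_right hLδ))

lemma measure_superlevel_eq (hμ : IsHomogeneousLogConcave μ D) (hv : Continuous v)
    (hs : HasCompactSupport v) {s : ℝ} (h0 : 0 ≤ s) :
    μ {x | s < v x} =
      μ (Metric.ball 0 1) * radialMeasure D {r | s < decreasingRearrangement μ D v r} := by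
  rw [hμ.measure_eq_radialMeasure_Iio (hμ.measure_superlevel_ne_top hs h0)]
  congr 1
  refine measure_congr ?_
  filter_upwards [ae_radialMeasure_pos D] with r hr
  refine propext ?_
  change r < _ ↔ s < _
  rw [hμ.lt_decreasingRearrangement_iff hv hs h0, max_eq_left hr.le]

lemma lintegral_rpow_decreasingRearrangement (hμ : IsHomogeneousLogConcave μ D)
    (hv : Continuous v) (hv0 : ∀ x, 0 ≤ v x) (hs : HasCompactSupport v) {a : ℝ} (ha : 0 < a) :
    ∫⁻ x, ENNReal.ofReal (v x ^ a) ∂μ = μ (Metric.ball 0 1) *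
      ∫⁻ r, ENNReal.ofReal (decreasingRearrangement μ D v r ^ a) ∂radialMeasure D := by
  rw [lintegral_rpow_eq_lintegral_meas_lt_mul _ (Eventually.of_forall hv0)
    hv.measurable.aemeasurable ha,
    lintegral_rpow_eq_lintegral_meas_lt_mul _
    (Eventually.of_forall (decreasingRearrangement_nonneg μ D v))
    (hμ.measurable_decreasingRearrangement hv hs).aemeasurable ha, mul_left_comm,
    ← lintegral_const_mul' (μ (Metric.ball 0 1)) _ hμ.measure_unitBall_lt_top.ne]
  refine congrArg _ (setLIntegral_congr_fun (measurableSet_Ioi (a := (0 : ℝ))) fun s hs0 => ?_)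
  rw [hμ.measure_superlevel_eq hv hs (le_of_lt hs0), mul_assoc]

lemma integral_rpow_decreasingRearrangement (hμ : IsHomogeneousLogConcave μ D)
    (hv : Continuous v) (hv0 : ∀ x, 0 ≤ v x) (hs : HasCompactSupport v) {a : ℝ} (ha : 0 < a) :
    ∫ x, v x ^ a ∂μ = μ.real (Metric.ball 0 1) *
      ∫ r, decreasingRearrangement μ D v r ^ a ∂radialMeasure D := by
  rw [integral_eq_lintegral_of_nonneg_ae
    (Eventually.of_forall fun x => rpow_nonneg (hv0 x) a)
    (hv.measurable.pow_const a).aestronglyMeasurable, integral_eq_lintegral_of_nonneg_ae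
    (Eventually.of_forall fun r => rpow_nonneg (decreasingRearrangement_nonneg μ D v r) a)
    ((hμ.measurable_decreasingRearrangement hv hs).pow_const a).aestronglyMeasurable,
    hμ.lintegral_rpow_decreasingRearrangement hv hv0 hs ha, ENNReal.toReal_mul, measureReal_def]

lemma integral_decreasingRearrangement (hμ : IsHomogeneousLogConcave μ D)
    (hv : Continuous v) (hv0 : ∀ x, 0 ≤ v x) (hs : HasCompactSupport v) :
    ∫ x, v x ∂μ = μ.real (Metric.ball 0 1) *
      ∫ r, decreasingRearrangement μ D v r ∂radialMeasure D := by
  simpa only [rpow_one] using hμ.integral_rpow_decreasingRearrangement hv hv0 hs one_pos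

end IsHomogeneousLogConcave

end Rearrangement

section ShiftDerivative

lemma tendsto_integral_shift_div {V z : ℝ → ℝ} {L : ℝ≥0} (hV : LipschitzWith L V) {ν : Measure ℝ}
    (hdiff : ∀ᵐ r ∂ν, DifferentiableAt ℝ V r) (hzm : Measurable z) (hz : Integrable z ν) :
    Tendsto (fun t => ∫ r, (V (r - t * z r) - V r) / t ∂ν) (𝓝[>] 0)
      (𝓝 (∫ r, -(deriv V r * z r) ∂ν)) := by
  have hVm : Measurable V := hV.continuous.measurable
  refine tendsto_integral_filter_of_dominated_convergence (fun r => L * |z r|)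
    (Eventually.of_forall fun t => ?_) ?_ (hz.abs.const_mul _) ?_
  · exact (((hVm.comp (measurable_id.sub (hzm.const_mul t))).sub hVm).div_const
      t).aestronglyMeasurable
  · filter_upwards [self_mem_nhdsWithin] with t (ht : 0 < t)
    refine Eventually.of_forall fun r => ?_
    have hdist := hV.dist_le_mul (r - t * z r) r
    rw [Real.dist_eq, Real.dist_eq, sub_sub_cancel_left, abs_neg, abs_mul, abs_of_pos ht] at hdist
    rw [norm_div, Real.norm_of_nonneg ht.le, div_le_iff₀ ht, Real.norm_eq_abs]
    linarith
  · filter_upwards [hdiff] with r hr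
    have hshift : HasDerivAt (fun t : ℝ => r - t * z r) (-z r) 0 := by
      simpa using ((hasDerivAt_id (0 : ℝ)).mul_const (z r)).const_sub r
    have hcomp : HasDerivAt (fun t : ℝ => V (r - t * z r)) (deriv V r * -z r) 0 :=
      HasDerivAt.comp 0 (by simpa using hr.hasDerivAt) hshift
    have hslope := hcomp.tendsto_slope_zero_right
    rw [mul_neg] at hslope
    refine hslope.congr fun t => ?_
    simp [div_eq_inv_mul]

lemma deriv_eq_zero_of_nonneg {V : ℝ → ℝ} (h0 : ∀ r, 0 ≤ V r) {r : ℝ} (hr : V r = 0) :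
    deriv V r = 0 :=
  IsLocalMin.deriv_eq_zero (Eventually.of_forall fun x => hr.trans_le (h0 x))

lemma integrable_of_bounded_of_eq_zero {α : Type*} [MeasurableSpace α] {μ : Measure α} {f : α → ℝ}
    {s : Set α} (hs : μ s ≠ ∞) (hf : AEStronglyMeasurable f μ) {C : ℝ} (hC : ∀ x, |f x| ≤ C)
    (h0 : ∀ x, x ∉ s → f x = 0) : Integrable f μ :=
  (Measure.integrableOn_of_bounded (M := C) hs hf
    (Eventually.of_forall hC)).integrable_of_forall_notMem_eq_zero h0

lemma ofReal_integral_le_lintegral_ofReal {α : Type*} [MeasurableSpace α] {μ : Measure α}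
    {f : α → ℝ} (hf : Integrable f μ) :
    ENNReal.ofReal (∫ x, f x ∂μ) ≤ ∫⁻ x, ENNReal.ofReal (f x) ∂μ := by
  rw [integral_eq_lintegral_pos_part_sub_lintegral_neg_part hf]
  refine (ENNReal.ofReal_le_ofReal (sub_le_self _ ENNReal.toReal_nonneg)).trans ?_
  exact ENNReal.ofReal_toReal_le

end ShiftDerivative

section PolyaSzego

variable {E : Type*} [NormedAddCommGroup E] [NormedSpace ℝ E]

lemma abs_le_add_of_norm_fderiv_le {u : E → ℝ} (hu : Differentiable ℝ u) {x y : E} {δ g : ℝ}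
    (h : ∀ w, ‖w - x‖ < δ → ‖fderiv ℝ u w‖ ≤ g) (hxy : ‖y - x‖ < δ) :
    |u y| ≤ |u x| + g * ‖y - x‖ := by
  have hmvt := (convex_ball x δ).norm_image_sub_le_of_norm_fderiv_le (f := u) (𝕜 := ℝ) (C := g)
    (fun w _ => hu w) (fun w hw => h w (by simpa [dist_eq_norm] using hw))
    (x := x) (y := y) (Metric.mem_ball_self ((norm_nonneg _).trans_lt hxy))
    (by simpa [dist_eq_norm] using hxy)
  rw [Real.norm_eq_abs] at hmvt
  linarith [abs_sub_abs_le_abs_sub (u y) (u x)]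

lemma abs_le_add_norm_fderiv_add_indicator_mul {u : E → ℝ} (hu : Differentiable ℝ u)
    {R ε η : ℝ} (hε : 0 ≤ ε) (hR : tsupport u ⊆ Metric.ball 0 R) (hη1 : η ≤ 1)
    (hη : ∀ x w, ‖w - x‖ < η → ‖fderiv ℝ u w‖ ≤ ‖fderiv ℝ u x‖ + ε) {x y : E}
    (hxy : ‖x - y‖ < η) :
    |u y| ≤ |u x| + (‖fderiv ℝ u x‖ + (Metric.ball 0 (R + 1)).indicator (fun _ => ε) x) *
      ‖x - y‖ := by
  by_cases hx : x ∈ Metric.ball 0 (R + 1)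
  · rw [indicator_of_mem hx, norm_sub_rev]
    rw [norm_sub_rev] at hxy
    exact abs_le_add_of_norm_fderiv_le hu (hη x) hxy
  · have hy : u y = 0 := by
      refine image_eq_zero_of_notMem_tsupport fun hy => hx ?_
      have hyR := hR hy
      rw [mem_ball_zero_iff] at hyR ⊢
      linarith [norm_sub_norm_le x y]
    rw [hy, abs_zero]
    have := indicator_nonneg (fun x (_ : x ∈ Metric.ball (0 : E) (R + 1)) => hε) x
    positivity

lemma exists_lipschitzWith_abs {u : E → ℝ} (hu : ContDiff ℝ 1 u) (hs : HasCompactSupport u) :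
    ∃ L, LipschitzWith L fun x => |u x| := by
  obtain ⟨L, hL⟩ := hu.lipschitzWith_of_hasCompactSupport hs one_ne_zero
  exact ⟨_, (lipschitzWith_one_norm (E := ℝ)).comp hL⟩

namespace IsHomogeneousLogConcave

variable [MeasurableSpace E] [BorelSpace E] {μ : Measure E} {D : ℝ} {v : E → ℝ}

lemma lintegral_decreasingRearrangement_shift_le (hμ : IsHomogeneousLogConcave μ D)
    (hv : Continuous v) (hs : HasCompactSupport v) {w : E → ℝ} (hw : Measurable w)
    (hwi : Integrable w μ) (hw0 : ∀ x, 0 ≤ w x) {c δ : ℝ → ℝ} (hc : Measurable c)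
    (hδ : Measurable δ) (hc0 : ∀ r, 0 ≤ c r) (hδ0 : ∀ r, 0 ≤ δ r)
    (H : ∀ r x y, ‖x - y‖ ≤ δ r → v y ≤ w x + c r) :
    μ (Metric.ball 0 1) *
        ∫⁻ r, ENNReal.ofReal (decreasingRearrangement μ D v (r - δ r) - c r) ∂radialMeasure D ≤
      ∫⁻ x, ENNReal.ofReal (w x) ∂μ := by
  have hVm : Measurable fun r => decreasingRearrangement μ D v (r - δ r) - c r :=
    ((hμ.measurable_decreasingRearrangement hv hs).comp (measurable_id.sub hδ)).sub hc
  rw [lintegral_eq_lintegral_meas_ofReal_lt _ hVm.ennreal_ofReal,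
    lintegral_eq_lintegral_meas_lt μ (Eventually.of_forall hw0) hw.aemeasurable,
    ← lintegral_const_mul' _ _ hμ.measure_unitBall_lt_top.ne]
  refine setLIntegral_mono' measurableSet_Ioi fun s (hs0 : 0 < s) => ?_
  have hfin : μ {x | s < w x} ≠ ∞ := (hwi.measure_gt_lt_top hs0).ne
  simp only [ENNReal.ofReal_lt_ofReal_iff_of_nonneg hs0.le]
  rw [hμ.measure_eq_radialMeasure_Iio hfin]
  gcongr _ * ?_
  refine measure_mono fun r (hr : s < _) => ?_
  exact hμ.lt_volumeRadius_of_lt_decreasingRearrangement_sub hv hs hw hfin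
    (add_nonneg hs0.le (hc0 r)) (hδ0 r) (H r) (lt_sub_iff_add_lt.1 hr)

lemma integrable_of_continuous (hμ : IsHomogeneousLogConcave μ D) (hv : Continuous v)
    (hs : HasCompactSupport v) : Integrable v μ := by
  have : IsFiniteMeasureOnCompacts μ := ⟨fun _ hK => hμ.measure_lt_top hK.isBounded⟩
  exact hv.integrable_of_hasCompactSupport hs

lemma integrable_decreasingRearrangement (hμ : IsHomogeneousLogConcave μ D) (hv : Continuous v)
    (hv0 : ∀ x, 0 ≤ v x) (hs : HasCompactSupport v) :
    Integrable (decreasingRearrangement μ D v) (radialMeasure D) := by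
  have hlin := hμ.lintegral_rpow_decreasingRearrangement hv hv0 hs one_pos
  simp only [rpow_one] at hlin
  refine ⟨(hμ.measurable_decreasingRearrangement hv hs).aestronglyMeasurable, ?_⟩
  rw [hasFiniteIntegral_iff_ofReal
    (Eventually.of_forall (decreasingRearrangement_nonneg μ D v))]
  refine ENNReal.lt_top_of_mul_ne_top_right ?_ hμ.measure_unitBall_pos.ne'
  rw [← hlin]
  exact ((hasFiniteIntegral_iff_ofReal (Eventually.of_forall hv0)).1
    (hμ.integrable_of_continuous hv hs).2).ne

lemma integral_decreasingRearrangement_shift_sub_le (hμ : IsHomogeneousLogConcave μ D)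
    {L : ℝ≥0} (hv : LipschitzWith L v) (hv0 : ∀ x, 0 ≤ v x) (hs : HasCompactSupport v)
    {e : E → ℝ} (he : Measurable e) (hei : Integrable e μ) (he0 : ∀ x, 0 ≤ e x) {c δ : ℝ → ℝ}
    (hc : Measurable c) (hδ : Measurable δ) (hc0 : ∀ r, 0 ≤ c r) (hδ0 : ∀ r, 0 ≤ δ r)
    (hci : Integrable c (radialMeasure D)) (hδi : Integrable δ (radialMeasure D))
    (H : ∀ r x y, ‖x - y‖ ≤ δ r → v y ≤ v x + e x + c r) :
    μ.real (Metric.ball 0 1) *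
        (∫ r, (decreasingRearrangement μ D v (r - δ r) - decreasingRearrangement μ D v r)
          ∂radialMeasure D - ∫ r, c r ∂radialMeasure D) ≤ ∫ x, e x ∂μ := by
  set V := decreasingRearrangement μ D v
  have hVL : LipschitzWith L V := hμ.lipschitzWith_decreasingRearrangement hv hs
  have hVm : Measurable V := hVL.continuous.measurable
  have hVi : Integrable V (radialMeasure D) :=
    hμ.integrable_decreasingRearrangement hv.continuous hv0 hs
  have hvi := hμ.integrable_of_continuous hv.continuous hs
  have hwi : Integrable (fun x => v x + e x) μ := hvi.add hei
  have hw0 (x : E) : 0 ≤ v x + e x := add_nonneg (hv0 x) (he0 x)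
  have hdiff : Integrable (fun r => V (r - δ r) - V r) (radialMeasure D) := by
    refine (hδi.const_mul L).mono'
      ((hVm.comp (measurable_id.sub hδ)).sub hVm).aestronglyMeasurable
      (Eventually.of_forall fun r => ?_)
    have hdist := hVL.dist_le_mul (r - δ r) r
    rwa [Real.dist_eq, Real.dist_eq, sub_sub_cancel_left, abs_neg, abs_of_nonneg (hδ0 r)] at hdist
  have hYi : Integrable (fun r => V (r - δ r) - c r) (radialMeasure D) :=
    ((hdiff.add hVi).sub hci).congr (Eventually.of_forall fun r => by simp)
  have hle : μ.real (Metric.ball 0 1) * ∫ r, (V (r - δ r) - c r) ∂radialMeasure D ≤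
      ∫ x, (v x + e x) ∂μ := by
    have hlin := hμ.lintegral_decreasingRearrangement_shift_le hv.continuous hs
      (w := fun x => v x + e x) (hv.continuous.measurable.add he) hwi hw0 hc hδ hc0 hδ0 H
    rw [← ofReal_integral_eq_lintegral_ofReal hwi (Eventually.of_forall hw0)] at hlin
    refine (ENNReal.ofReal_le_ofReal_iff (integral_nonneg hw0)).1 (le_trans ?_ hlin)
    rw [ENNReal.ofReal_mul measureReal_nonneg, ofReal_measureReal hμ.measure_unitBall_lt_top.ne]
    gcongr
    exact ofReal_integral_le_lintegral_ofReal hYi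
  have hsplit : ∫ r, (V (r - δ r) - c r) ∂radialMeasure D =
      ∫ r, (V (r - δ r) - V r) ∂radialMeasure D + ∫ r, V r ∂radialMeasure D -
        ∫ r, c r ∂radialMeasure D := by
    have hsum : Integrable (fun r => V (r - δ r) - V r + V r) (radialMeasure D) := hdiff.add hVi
    rw [← integral_add hdiff hVi, ← integral_sub hsum hci]
    simp
  rw [integral_add hvi hei, hμ.integral_decreasingRearrangement hv.continuous hv0 hs, hsplit] at hle
  linarith

/-- A dual form of the Pólya–Szegő inequality, where `G` is an upper gradient of `v` at some
positive scale and `z` is a test function. -/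
lemma integral_deriv_mul_decreasingRearrangement_le (hμ : IsHomogeneousLogConcave μ D) {p q : ℝ}
    (hpq : p.HolderConjugate q) {L : ℝ≥0} (hv : LipschitzWith L v) (hv0 : ∀ x, 0 ≤ v x)
    (hs : HasCompactSupport v) {G : E → ℝ} (hG : Measurable G) (hG0 : ∀ x, 0 ≤ G x)
    (hGi : Integrable (fun x => G x ^ p) μ) {η : ℝ} (hη : 0 < η)
    (H : ∀ x y, ‖x - y‖ < η → v y ≤ v x + G x * ‖x - y‖) {z : ℝ → ℝ} (hz : Measurable z)
    (hz0 : ∀ r, 0 ≤ z r) {Z : ℝ} (hzZ : ∀ r, z r ≤ Z) (hzi : Integrable z (radialMeasure D))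
    (hzq : Integrable (fun r => z r ^ q) (radialMeasure D)) :
    μ.real (Metric.ball 0 1) * (∫ r, -(deriv (decreasingRearrangement μ D v) r * z r)
      ∂radialMeasure D - (∫ r, z r ^ q ∂radialMeasure D) / q) ≤ (∫ x, G x ^ p ∂μ) / p := by
  have hp := hpq.pos
  have hq := hpq.symm.pos
  have hVL := hμ.lipschitzWith_decreasingRearrangement hv hs
  have hlim := ((tendsto_integral_shift_div hVL
    (ae_radialMeasure_of_ae D hVL.ae_differentiableAt_real) hz hzi).sub_const
    ((∫ r, z r ^ q ∂radialMeasure D) / q)).const_mul (μ.real (Metric.ball 0 1))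
  refine le_of_tendsto hlim ?_
  have hsmall : ∀ᶠ t in 𝓝[>] (0 : ℝ), t * Z < η :=
    ((continuous_id.mul continuous_const).tendsto' 0 0 (zero_mul Z)).mono_left nhdsWithin_le_nhds
      |>.eventually (gt_mem_nhds hη)
  filter_upwards [self_mem_nhdsWithin, hsmall] with t (ht : 0 < t) htZ
  have hyoung (r : ℝ) (x y : E) (hxy : ‖x - y‖ ≤ t * z r) :
      v y ≤ v x + t * (G x ^ p / p) + t * (z r ^ q / q) := by
    have hscale := H x y (hxy.trans_lt ((mul_le_mul_of_nonneg_left (hzZ r) ht.le).trans_lt htZ))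
    have hGz := mul_le_mul_of_nonneg_left (young_inequality_of_nonneg (hG0 x) (hz0 r) hpq) ht.le
    have hGxy := mul_le_mul_of_nonneg_left hxy (hG0 x)
    linarith
  have hshift := hμ.integral_decreasingRearrangement_shift_sub_le hv hv0 hs
    (((hG.pow_const p).div_const p).const_mul t) ((hGi.div_const p).const_mul t)
    (fun x => mul_nonneg ht.le (div_nonneg (rpow_nonneg (hG0 x) p) hp.le))
    (((hz.pow_const q).div_const q).const_mul t) (hz.const_mul t)
    (fun r => mul_nonneg ht.le (div_nonneg (rpow_nonneg (hz0 r) q) hq.le))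
    (fun r => mul_nonneg ht.le (hz0 r)) ((hzq.div_const q).const_mul t) (hzi.const_mul t) hyoung
  rw [integral_const_mul, integral_const_mul, integral_div, integral_div] at hshift
  rw [integral_div]
  refine le_of_mul_le_mul_left (le_trans (le_of_eq ?_) hshift) ht
  field_simp

lemma integral_abs_deriv_decreasingRearrangement_rpow_le (hμ : IsHomogeneousLogConcave μ D)
    {p : ℝ} (hp1 : 1 < p) {L : ℝ≥0} (hv : LipschitzWith L v) (hv0 : ∀ x, 0 ≤ v x)
    (hs : HasCompactSupport v) {G : E → ℝ} (hG : Measurable G) (hG0 : ∀ x, 0 ≤ G x)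
    (hGi : Integrable (fun x => G x ^ p) μ) {η : ℝ} (hη : 0 < η)
    (H : ∀ x y, ‖x - y‖ < η → v y ≤ v x + G x * ‖x - y‖) :
    μ.real (Metric.ball 0 1) * ∫ r, |deriv (decreasingRearrangement μ D v) r| ^ p
      ∂radialMeasure D ≤ ∫ x, G x ^ p ∂μ := by
  obtain ⟨q, hpq⟩ : ∃ q, p.HolderConjugate q := ⟨_, Real.HolderConjugate.conjExponent hp1⟩
  set V := decreasingRearrangement μ D v
  set R := volumeRadius μ D {x | 0 < v x}
  have hsupp {a : ℝ} (ha : 0 < a) (r : ℝ) (hr : r ∉ Iio R) : |deriv V r| ^ a = 0 := by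
    rw [deriv_eq_zero_of_nonneg (decreasingRearrangement_nonneg μ D v)
      (hμ.decreasingRearrangement_eq_zero hv.continuous hs (not_lt.1 hr)), abs_zero,
      zero_rpow ha.ne']
  have hbound {a : ℝ} (ha : 0 < a) (r : ℝ) : |deriv V r| ^ a ≤ (L : ℝ) ^ a :=
    rpow_le_rpow (abs_nonneg _)
      (norm_deriv_le_of_lipschitz (hμ.lipschitzWith_decreasingRearrangement hv hs)) ha.le
  have hmeas (a : ℝ) : Measurable fun r => |deriv V r| ^ a := (measurable_deriv V).norm.pow_const a
  have hint {a : ℝ} (ha : 0 < a) : Integrable (fun r => |deriv V r| ^ a) (radialMeasure D) :=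
    integrable_of_bounded_of_eq_zero (radialMeasure_Iio_ne_top hμ.dim_pos
      (volumeRadius_nonneg _ _ _)) (hmeas a).aestronglyMeasurable
      (fun r => by rw [abs_of_nonneg (rpow_nonneg (abs_nonneg _) a)]; exact hbound ha r) (hsupp ha)
  have hpow (r : ℝ) : (|deriv V r| ^ (p - 1)) ^ q = |deriv V r| ^ p := by
    rw [← rpow_mul (abs_nonneg _), hpq.sub_one_mul_conj]
  have hmul (r : ℝ) : -(deriv V r * |deriv V r| ^ (p - 1)) = |deriv V r| ^ p := by
    have hd : deriv V r ≤ 0 :=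
      (hμ.antitone_decreasingRearrangement hv.continuous hs).deriv_nonpos
    rw [← neg_mul, ← abs_of_nonpos hd, ← rpow_one_add' (abs_nonneg _) (by linarith)]
    congr 1
    ring
  -- Equality case of Young's inequality.
  have hdual := hμ.integral_deriv_mul_decreasingRearrangement_le hpq hv hv0 hs hG hG0 hGi hη H
    (hmeas (p - 1)) (fun r => rpow_nonneg (abs_nonneg _) _) (hbound hpq.sub_one_pos)
    (hint hpq.sub_one_pos) (by simpa only [hpow] using hint hpq.pos)
  simp only [hpow, V, hmul] at hdual
  rwa [div_eq_mul_inv _ q, ← hpq.one_sub_inv, mul_one_sub, ← div_eq_mul_inv, sub_sub_cancel,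
    ← mul_div_assoc, div_le_div_iff_of_pos_right hpq.pos] at hdual

lemma integrable_norm_fderiv_add_indicator_rpow (hμ : IsHomogeneousLogConcave μ D) {p : ℝ}
    (hp : 0 < p) {u : E → ℝ} (hu : ContDiff ℝ 1 u) (hs : HasCompactSupport u) {R ε : ℝ}
    (hε : 0 ≤ ε) (hR : tsupport u ⊆ Metric.ball 0 R) :
    Integrable (fun x => (‖fderiv ℝ u x‖ + (Metric.ball 0 R).indicator (fun _ => ε) x) ^ p) μ := by
  have hdc := hu.continuous_fderiv one_ne_zero
  obtain ⟨M, hM⟩ := hdc.bounded_above_of_compact_support (hs.fderiv ℝ)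
  have hG0 (x : E) : 0 ≤ ‖fderiv ℝ u x‖ + (Metric.ball 0 R).indicator (fun _ => ε) x :=
    add_nonneg (norm_nonneg _) (indicator_nonneg (fun _ _ => hε) x)
  refine integrable_of_bounded_of_eq_zero (s := Metric.ball 0 R) (C := (M + ε) ^ p)
    (hμ.measure_lt_top Metric.isBounded_ball).ne ((hdc.norm.measurable.add
      (measurable_const.indicator Metric.isOpen_ball.measurableSet)).pow_const
        p).aestronglyMeasurable (fun x => ?_) fun x hx => ?_
  · rw [abs_of_nonneg (rpow_nonneg (hG0 x) p)]
    exact rpow_le_rpow (hG0 x) (add_le_add (hM x) (indicator_le_self' (fun _ _ => hε) x)) hp.le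
  · rw [fderiv_of_notMem_tsupport ℝ fun h => hx (hR h), norm_zero, indicator_of_notMem hx,
      add_zero, zero_rpow hp.ne']

lemma tendsto_integral_norm_fderiv_add_indicator_rpow (hμ : IsHomogeneousLogConcave μ D) {p : ℝ}
    (hp : 0 < p) {u : E → ℝ} (hu : ContDiff ℝ 1 u) (hs : HasCompactSupport u) {R : ℝ}
    (hR : tsupport u ⊆ Metric.ball 0 R) :
    Tendsto (fun ε => ∫ x, (‖fderiv ℝ u x‖ + (Metric.ball 0 R).indicator (fun _ => ε) x) ^ p ∂μ)
      (𝓝[>] 0) (𝓝 (∫ x, ‖fderiv ℝ u x‖ ^ p ∂μ)) := by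
  refine tendsto_integral_filter_of_dominated_convergence
    (fun x => (‖fderiv ℝ u x‖ + (Metric.ball 0 R).indicator (fun _ => 1) x) ^ p) ?_ ?_
    (hμ.integrable_norm_fderiv_add_indicator_rpow hp hu hs zero_le_one hR)
    (Eventually.of_forall fun x => ?_)
  · filter_upwards [self_mem_nhdsWithin] with ε (hε : 0 < ε)
    exact (hμ.integrable_norm_fderiv_add_indicator_rpow hp hu hs hε.le hR).aestronglyMeasurable
  · filter_upwards [Ioc_mem_nhdsGT zero_lt_one] with ε hε
    refine Eventually.of_forall fun x => ?_
    have hG0 : 0 ≤ ‖fderiv ℝ u x‖ + (Metric.ball 0 R).indicator (fun _ => ε) x :=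
      add_nonneg (norm_nonneg _) (indicator_nonneg (fun _ _ => hε.1.le) x)
    rw [Real.norm_of_nonneg (rpow_nonneg hG0 p)]
    exact rpow_le_rpow hG0 (add_le_add_right (indicator_le_indicator hε.2) _) hp.le
  · have hcont : Continuous fun ε =>
        (‖fderiv ℝ u x‖ + (Metric.ball 0 R).indicator (fun _ => ε) x) ^ p := by
      refine Continuous.rpow_const (continuous_const.add ?_) fun _ => Or.inr hp.le
      by_cases hx : x ∈ Metric.ball 0 R
      · simpa only [indicator_of_mem hx] using continuous_id'
      · simpa only [indicator_of_notMem hx] using continuous_const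
    have hlim := hcont.tendsto 0
    rw [indicator_zero, add_zero] at hlim
    exact hlim.mono_left nhdsWithin_le_nhds

lemma integral_abs_deriv_decreasingRearrangement_rpow_le_integral_norm_fderiv_rpow
    (hμ : IsHomogeneousLogConcave μ D) {p : ℝ} (hp1 : 1 < p) {u : E → ℝ} (hu : ContDiff ℝ 1 u)
    (hs : HasCompactSupport u) :
    μ.real (Metric.ball 0 1) * ∫ r, |deriv (decreasingRearrangement μ D fun x => |u x|) r| ^ p
      ∂radialMeasure D ≤ ∫ x, ‖fderiv ℝ u x‖ ^ p ∂μ := by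
  have hp : 0 < p := zero_lt_one.trans hp1
  have hdc := hu.continuous_fderiv one_ne_zero
  obtain ⟨R, hR⟩ := hs.isCompact.isBounded.subset_ball 0
  have hR1 : tsupport u ⊆ Metric.ball 0 (R + 1) :=
    hR.trans (Metric.ball_subset_ball (le_add_of_nonneg_right zero_le_one))
  obtain ⟨L, hL⟩ := exists_lipschitzWith_abs hu hs
  refine ge_of_tendsto (hμ.tendsto_integral_norm_fderiv_add_indicator_rpow hp hu hs hR1) ?_
  filter_upwards [self_mem_nhdsWithin] with ε (hε : 0 < ε)
  obtain ⟨δ, hδ, hosc⟩ := Metric.uniformContinuous_iff.1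
    ((hs.fderiv ℝ).uniformContinuous_of_continuous hdc) ε hε
  have hgrad (x w : E) (hw : ‖w - x‖ < min δ 1) : ‖fderiv ℝ u w‖ ≤ ‖fderiv ℝ u x‖ + ε := by
    have hdist := @hosc w x ((dist_eq_norm w x).trans_lt (hw.trans_le (min_le_left _ _)))
    rw [dist_eq_norm] at hdist
    linarith [norm_sub_norm_le (fderiv ℝ u w) (fderiv ℝ u x)]
  exact hμ.integral_abs_deriv_decreasingRearrangement_rpow_le hp1 hL (fun x => abs_nonneg (u x))
    (hs.comp_left abs_zero)
    (hdc.norm.measurable.add (measurable_const.indicator Metric.isOpen_ball.measurableSet))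
    (fun x => add_nonneg (norm_nonneg _) (indicator_nonneg (fun _ _ => hε.le) x))
    (hμ.integrable_norm_fderiv_add_indicator_rpow hp hu hs hε.le hR1) (lt_min hδ zero_lt_one)
    fun x y => abs_le_add_norm_fderiv_add_indicator_mul (hu.differentiable one_ne_zero) hε.le hR
      (min_le_right δ 1) hgrad

end IsHomogeneousLogConcave

end PolyaSzego

section Transport

variable {f w T : ℝ → ℝ} {a b c d : ℝ}

lemma hasDerivAt_integral_of_continuousOn (hf : ContinuousOn f (Icc a b)) {x : ℝ}
    (hx : x ∈ Ioo a b) : HasDerivAt (fun x => ∫ t in a..x, f t) (f x) x := by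
  have hn : Icc a b ∈ 𝓝 x := Icc_mem_nhds hx.1 hx.2
  refine intervalIntegral.integral_hasDerivAt_right
    (ContinuousOn.intervalIntegrable (hf.mono ?_))
    ((hf.stronglyMeasurableAtFilter_nhdsWithin measurableSet_Icc x).filter_mono ?_)
    (hf.continuousAt hn)
  · rw [uIcc_of_le hx.1.le]
    exact Icc_subset_Icc_right hx.2.le
  · rw [nhdsWithin_eq_nhds.2 hn]

lemma strictMonoOn_integral_of_pos (hab : a ≤ b) (hf : ContinuousOn f (Icc a b))
    (hf0 : ∀ x ∈ Ioo a b, 0 < f x) : StrictMonoOn (fun x => ∫ t in a..x, f t) (Icc a b) := by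
  refine strictMonoOn_of_deriv_pos (convex_Icc a b) ?_ fun x hx => ?_
  · have hi := ContinuousOn.intervalIntegrable (μ := volume) (hf.mono (uIcc_of_le hab).subset)
    simpa only [uIcc_of_le hab] using
      intervalIntegral.continuousOn_primitive_interval' hi left_mem_uIcc
  · rw [interior_Icc] at hx
    rw [(hasDerivAt_integral_of_continuousOn hf hx).deriv]
    exact hf0 x hx

lemma bijOn_integral_of_pos (hab : a ≤ b) (hf : ContinuousOn f (Icc a b))
    (hf0 : ∀ x ∈ Ioo a b, 0 < f x) :
    BijOn (fun x => ∫ t in a..x, f t) (Ioo a b) (Ioo 0 (∫ t in a..b, f t)) := by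
  have hm := strictMonoOn_integral_of_pos hab hf hf0
  have hc : ContinuousOn (fun x => ∫ t in a..x, f t) (Icc a b) := by
    have hi := ContinuousOn.intervalIntegrable (μ := volume) (hf.mono (uIcc_of_le hab).subset)
    simpa only [uIcc_of_le hab] using
      intervalIntegral.continuousOn_primitive_interval' hi left_mem_uIcc
  have hmaps := hm.mapsTo_Ioo
  have hsurj := intermediate_value_Ioo hab hc
  rw [intervalIntegral.integral_same] at hmaps hsurj
  exact ⟨hmaps, (hm.mono Ioo_subset_Icc_self).injOn, hsurj⟩

lemma exists_bijOn_hasDerivAt_div (hab : a ≤ b) (hcd : c ≤ d)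
    (hf : ContinuousOn f (Icc a b)) (hf0 : ∀ x ∈ Ioo a b, 0 < f x)
    (hw : ContinuousOn w (Icc c d)) (hw0 : ∀ x ∈ Ioo c d, 0 < w x)
    (heq : ∫ t in a..b, f t = ∫ t in c..d, w t) :
    ∃ T : ℝ → ℝ, BijOn T (Ioo a b) (Ioo c d) ∧
      ∀ x ∈ Ioo a b, HasDerivAt T (f x / w (T x)) x := by
  have hF := bijOn_integral_of_pos hab hf hf0
  have hW := bijOn_integral_of_pos hcd hw hw0
  have hWmono := (strictMonoOn_integral_of_pos hcd hw hw0).mono Ioo_subset_Icc_self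
  rw [heq] at hF
  set F : ℝ → ℝ := fun x => ∫ t in a..x, f t
  set W : ℝ → ℝ := fun x => ∫ t in c..x, w t
  set M := ∫ t in c..d, w t
  set S := Function.invFunOn W (Ioo c d)
  have hinv : InvOn S W (Ioo c d) (Ioo 0 M) := hW.invOn_invFunOn
  have hS : BijOn S (Ioo 0 M) (Ioo c d) := hW.symm hinv.symm
  have hSmono : MonotoneOn S (Ioo 0 M) := by
    intro x hx y hy hxy
    rwa [← hWmono.le_iff_le (hS.mapsTo hx) (hS.mapsTo hy), hinv.2 hx, hinv.2 hy]
  have hSderiv (y : ℝ) (hy : y ∈ Ioo 0 M) : HasDerivAt S (w (S y))⁻¹ y := by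
    have hn : Ioo 0 M ∈ 𝓝 y := Ioo_mem_nhds hy.1 hy.2
    have hSy := hS.mapsTo hy
    refine HasDerivAt.of_local_left_inverse (f := W) ?_
      (hasDerivAt_integral_of_continuousOn hw hSy) (hw0 _ hSy).ne' ?_
    · refine continuousAt_of_monotoneOn_of_image_mem_nhds hSmono hn ?_
      rw [hS.image_eq]
      exact Ioo_mem_nhds hSy.1 hSy.2
    · filter_upwards [hn] with z hz using hinv.2 hz
  refine ⟨S ∘ F, hS.comp hF, fun x hx => ?_⟩
  have hcomp := (hSderiv (F x) (hF.mapsTo hx)).comp x (hasDerivAt_integral_of_continuousOn hf hx)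
  rwa [inv_mul_eq_div] at hcomp

variable {s t : Set ℝ}

lemma abs_div_smul_mul_eq_of_transport (hT : MapsTo T s t) (hf0 : ∀ x ∈ s, 0 < f x)
    (hw0 : ∀ y ∈ t, 0 < w y) (φ : ℝ → ℝ) {x : ℝ} (hx : x ∈ s) :
    |f x / w (T x)| • (φ (T x) * w (T x)) = φ (T x) * f x := by
  have hw := hw0 (T x) (hT hx)
  rw [abs_of_pos (div_pos (hf0 x hx) hw), smul_eq_mul]
  field_simp

lemma setIntegral_mul_eq_of_transport (hs : MeasurableSet s) (hT : BijOn T s t)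
    (hd : ∀ x ∈ s, HasDerivAt T (f x / w (T x)) x) (hf0 : ∀ x ∈ s, 0 < f x)
    (hw0 : ∀ y ∈ t, 0 < w y) (φ : ℝ → ℝ) :
    ∫ y in t, φ y * w y = ∫ x in s, φ (T x) * f x := by
  rw [← hT.image_eq, integral_image_eq_integral_abs_deriv_smul hs
    (fun x hx => (hd x hx).hasDerivWithinAt) hT.injOn]
  exact setIntegral_congr_fun hs fun x hx =>
    abs_div_smul_mul_eq_of_transport hT.mapsTo hf0 hw0 φ hx

lemma integrableOn_mul_iff_of_transport (hs : MeasurableSet s) (hT : BijOn T s t)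
    (hd : ∀ x ∈ s, HasDerivAt T (f x / w (T x)) x) (hf0 : ∀ x ∈ s, 0 < f x)
    (hw0 : ∀ y ∈ t, 0 < w y) (φ : ℝ → ℝ) :
    IntegrableOn (fun y => φ y * w y) t ↔ IntegrableOn (fun x => φ (T x) * f x) s := by
  rw [← hT.image_eq, integrableOn_image_iff_integrableOn_abs_deriv_smul hs
    (fun x hx => (hd x hx).hasDerivWithinAt) hT.injOn]
  exact integrableOn_congr_fun
    (fun x hx => abs_div_smul_mul_eq_of_transport hT.mapsTo hf0 hw0 φ hx) hs

/-- The arithmetic-geometric mean inequality for the eigenvalues `T'` and `T / r` (of multiplicity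
`D - 1`) of the differential of the radial map `x ↦ T(‖x‖) x / ‖x‖`. -/
lemma mul_le_of_radial_transport {D X r m τ τ' : ℝ} (hD : 1 < D) (hX : 0 < X) (hr : 0 < r)
    (hm : 0 < m) (hτ : 0 < τ) (hτ' : 0 ≤ τ')
    (hjac : m ^ (-D) * τ ^ (D - 1) * τ' = X * r ^ (D - 1)) :
    m * (X * r ^ (D - 1)) ≤
      1 / D * X ^ (1 - 1 / D) * ((D - 1) * r ^ (D - 2) * τ + r ^ (D - 1) * τ') := by
  have hD0 : 0 < D := zero_lt_one.trans hD
  have hamgm := geom_mean_le_arith_mean2_weighted (w₁ := 1 / D) (w₂ := (D - 1) / D) (p₁ := τ')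
    (p₂ := τ / r) (by positivity) (div_nonneg (by linarith) hD0.le) hτ' (by positivity)
    (by field_simp; ring)
  have hdet : τ' * (τ / r) ^ (D - 1) = X * m ^ D := by
    rw [rpow_neg hm.le] at hjac
    rw [div_rpow hτ.le hr.le]
    field_simp at hjac ⊢
    linarith
  have hgeom : τ' ^ (1 / D) * (τ / r) ^ ((D - 1) / D) = X ^ (1 / D) * m := by
    rw [← mul_one_div (D - 1), rpow_mul (by positivity), ← mul_rpow hτ' (by positivity), hdet,
      mul_rpow hX.le (by positivity), ← rpow_mul hm.le, mul_one_div_cancel hD0.ne', rpow_one]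
  have hXsplit : X ^ (1 - 1 / D) * X ^ (1 / D) = X := by
    rw [← rpow_add hX, sub_add_cancel, rpow_one]
  have hrsplit : r ^ (D - 1) = r ^ (D - 2) * r := by
    rw [← rpow_add_one hr.ne']
    ring_nf
  calc m * (X * r ^ (D - 1))
      = X ^ (1 - 1 / D) * r ^ (D - 1) * (X ^ (1 / D) * m) := by
        nth_rw 1 [← hXsplit]
        ring
    _ ≤ X ^ (1 - 1 / D) * r ^ (D - 1) * (1 / D * τ' + (D - 1) / D * (τ / r)) := by
        rw [← hgeom]
        gcongr
    _ = 1 / D * X ^ (1 - 1 / D) * ((D - 1) * r ^ (D - 2) * τ + r ^ (D - 1) * τ') := by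
        rw [hrsplit]
        field_simp
        ring

end Transport

section IntegrationByParts

variable {V g g' h : ℝ → ℝ} {L : ℝ≥0} {θ a b : ℝ}

lemma exists_lipschitzOnWith_rpow (hV : LipschitzWith L V) (h0 : ∀ r, 0 ≤ V r)
    (hθ : 1 ≤ θ) (a b : ℝ) : ∃ K, LipschitzOnWith K (fun r => V r ^ θ) (uIcc a b) := by
  obtain ⟨M, hM⟩ := isCompact_uIcc.exists_bound_of_continuousOn hV.continuous.continuousOn
  have hpow : ContDiff ℝ 1 fun x : ℝ => x ^ θ := contDiff_rpow_const_of_le (by simpa using hθ)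
  obtain ⟨K, hK⟩ := hpow.contDiffOn.exists_lipschitzOnWith one_ne_zero (convex_Icc (0 : ℝ) M)
    isCompact_Icc
  exact ⟨K * L, hK.comp hV.lipschitzOnWith fun r hr => ⟨h0 r, (le_abs_self _).trans (hM r hr)⟩⟩

lemma integral_rpow_mul_deriv_eq_sub (hV : LipschitzWith L V) (h0 : ∀ r, 0 ≤ V r)
    (hθ : 1 ≤ θ) (hg : ∀ r ∈ uIcc a b, HasDerivAt g (g' r) r) (hg' : ContinuousOn g' (uIcc a b)) :
    ∫ r in a..b, V r ^ θ * g' r =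
      V b ^ θ * g b - V a ^ θ * g a - θ * ∫ r in a..b, V r ^ (θ - 1) * deriv V r * g r := by
  obtain ⟨K, hK⟩ := exists_lipschitzOnWith_rpow hV h0 hθ a b
  have hgac : AbsolutelyContinuousOnInterval g a b := by
    obtain ⟨C, hC⟩ := isCompact_uIcc.exists_bound_of_continuousOn hg'
    exact ((convex_uIcc a b).lipschitzOnWith_of_nnnorm_hasDerivWithin_le (C := C.toNNReal)
      (fun x hx => (hg x hx).hasDerivWithinAt)
      fun x hx => by
        rw [← NNReal.coe_le_coe, coe_nnnorm]
        exact (hC x hx).trans (le_coe_toNNReal C)).absolutelyContinuousOnInterval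
  have hg'eq : ∫ r in a..b, V r ^ θ * deriv g r = ∫ r in a..b, V r ^ θ * g' r :=
    intervalIntegral.integral_congr fun r hr => by simp only [(hg r hr).deriv]
  have hV'eq : ∫ r in a..b, deriv (fun r => V r ^ θ) r * g r =
      ∫ r in a..b, θ * (V r ^ (θ - 1) * deriv V r * g r) := by
    refine intervalIntegral.integral_congr_ae ?_
    filter_upwards [hV.ae_differentiableAt_real] with r hr _
    rw [(hr.hasDerivAt.rpow_const (Or.inr hθ)).deriv]
    ring
  rw [← hg'eq, hK.absolutelyContinuousOnInterval.integral_mul_deriv_eq_deriv_mul hgac, hV'eq,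
    intervalIntegral.integral_const_mul]

lemma integrableOn_rpow_mul_abs_deriv_mul (hV : LipschitzWith L V) (h0 : ∀ r, 0 ≤ V r)
    (hθ : 0 ≤ θ) (hg : ContinuousOn g (Ioo a b)) {B : ℝ} (hgB : ∀ r ∈ Ioo a b, |g r| ≤ B) :
    IntegrableOn (fun r => V r ^ θ * |deriv V r| * g r) (Ioo a b) := by
  obtain ⟨M, hM⟩ := isCompact_Icc.exists_bound_of_continuousOn (s := Icc a b)
    hV.continuous.continuousOn
  refine Integrable.of_bound ((((hV.continuous.rpow_const fun _ => Or.inr hθ).measurable.mul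
    (measurable_deriv V).norm).aestronglyMeasurable).mul
      (hg.aestronglyMeasurable measurableSet_Ioo)) (M ^ θ * L * B) ?_
  refine ae_restrict_of_forall_mem measurableSet_Ioo fun r hr => ?_
  have hVr : V r ^ θ ≤ M ^ θ :=
    rpow_le_rpow (h0 r) ((le_abs_self _).trans (hM r (Ioo_subset_Icc_self hr))) hθ
  have hV' : |deriv V r| ≤ L := norm_deriv_le_of_lipschitz hV
  rw [norm_mul, norm_mul, Real.norm_of_nonneg (rpow_nonneg (h0 r) θ), Real.norm_eq_abs, abs_abs,
    Real.norm_eq_abs]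
  have hVr0 := rpow_nonneg (h0 r) θ
  have hM0 := hVr0.trans hVr
  gcongr
  exact hgB r hr

lemma setIntegral_Icc_le_of_le_rpow_mul_deriv (hab : a ≤ b) (hV : LipschitzWith L V)
    (h0 : ∀ r, 0 ≤ V r) (hθ : 1 ≤ θ) (hg : ∀ r ∈ Icc a b, HasDerivAt g (g' r) r)
    (hg' : ContinuousOn g' (Icc a b)) (hg0 : ∀ r ∈ Icc a b, 0 ≤ g r)
    (hh : IntegrableOn h (Icc a b)) (hle : ∀ r ∈ Icc a b, h r ≤ V r ^ θ * g' r) :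
    ∫ r in Icc a b, h r ≤
      V b ^ θ * g b + θ * ∫ r in Icc a b, V r ^ (θ - 1) * |deriv V r| * g r := by
  have hθ0 := zero_le_one.trans hθ
  have hmono : ∫ r in Icc a b, h r ≤ ∫ r in Icc a b, V r ^ θ * g' r :=
    setIntegral_mono_on hh (((hV.continuous.rpow_const fun _ =>
      Or.inr hθ0).continuousOn.mul hg').integrableOn_Icc) measurableSet_Icc hle
  have hparts : ∫ r in Icc a b, V r ^ θ * g' r = V b ^ θ * g b - V a ^ θ * g a -
      θ * ∫ r in Icc a b, V r ^ (θ - 1) * deriv V r * g r := by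
    simp only [integral_Icc_eq_integral_Ioc, ← intervalIntegral.integral_of_le hab]
    rw [← uIcc_of_le hab] at hg hg'
    exact integral_rpow_mul_deriv_eq_sub hV h0 hθ hg hg'
  have habs : -∫ r in Icc a b, V r ^ (θ - 1) * deriv V r * g r ≤
      ∫ r in Icc a b, V r ^ (θ - 1) * |deriv V r| * g r := by
    refine (neg_le_abs _).trans (abs_integral_le_integral_abs.trans_eq ?_)
    refine setIntegral_congr_fun measurableSet_Icc fun r hr => ?_
    simp only [abs_mul, abs_of_nonneg (rpow_nonneg (h0 r) _), abs_of_nonneg (hg0 r hr)]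
  have hVga := mul_nonneg (rpow_nonneg (h0 a) θ) (hg0 a (left_mem_Icc.2 hab))
  linarith [mul_le_mul_of_nonneg_left habs hθ0]

lemma setIntegral_Ioo_le_of_le_rpow_mul_deriv (hab : a < b) (hV : LipschitzWith L V)
    (h0 : ∀ r, 0 ≤ V r) (hVb : V b = 0) (hθ : 1 ≤ θ)
    (hg : ∀ r ∈ Ioo a b, HasDerivAt g (g' r) r) (hg' : ContinuousOn g' (Ioo a b))
    (hg0 : ∀ r ∈ Ioo a b, 0 ≤ g r) {B : ℝ} (hgB : ∀ r ∈ Ioo a b, g r ≤ B)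
    (hh : IntegrableOn h (Ioo a b)) (hle : ∀ r ∈ Ioo a b, h r ≤ V r ^ θ * g' r) :
    ∫ r in Ioo a b, h r ≤ θ * ∫ r in Ioo a b, V r ^ (θ - 1) * |deriv V r| * g r := by
  have hθ0 := zero_le_one.trans hθ
  have hX : IntegrableOn (fun r => V r ^ (θ - 1) * |deriv V r| * g r) (Ioo a b) :=
    integrableOn_rpow_mul_abs_deriv_mul hV h0 (sub_nonneg.2 hθ)
      (fun r hr => (hg r hr).continuousAt.continuousWithinAt)
      fun r hr => (abs_of_nonneg (hg0 r hr)).trans_le (hgB r hr)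
  have hδ : Tendsto id (𝓝[>] (0 : ℝ)) (𝓝 0) := tendsto_id.mono_left nhdsWithin_le_nhds
  have ha : Tendsto (fun δ => a + δ) (𝓝[>] 0) (𝓝 a) := by simpa using hδ.const_add a
  have hb : Tendsto (fun δ => b - δ) (𝓝[>] 0) (𝓝 b) := by simpa using hδ.const_sub b
  have hcover := (aecover_Ioo_of_Icc (μ := volume) ha hb).integral_tendsto_of_countably_generated hh
  have hbound : Tendsto (fun δ => V (b - δ) ^ θ * B +
      θ * ∫ r in Ioo a b, V r ^ (θ - 1) * |deriv V r| * g r) (𝓝[>] 0)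
      (𝓝 (θ * ∫ r in Ioo a b, V r ^ (θ - 1) * |deriv V r| * g r)) := by
    have hVθ := (((hV.continuous.rpow_const fun _ => Or.inr hθ0).tendsto b).comp hb).mul_const B
    rw [hVb, zero_rpow (zero_lt_one.trans_le hθ).ne', zero_mul] at hVθ
    simpa using hVθ.add_const (θ * ∫ r in Ioo a b, V r ^ (θ - 1) * |deriv V r| * g r)
  refine le_of_tendsto_of_tendsto hcover hbound ?_
  filter_upwards [Ioc_mem_nhdsGT (half_pos (sub_pos.2 hab))] with δ hδ
  have hsub : Icc (a + δ) (b - δ) ⊆ Ioo a b :=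
    Icc_subset_Ioo (lt_add_of_pos_right a hδ.1) (sub_lt_self b hδ.1)
  have hle' : a + δ ≤ b - δ := by linarith [hδ.2]
  rw [Measure.restrict_restrict measurableSet_Icc, inter_eq_self_of_subset_left hsub]
  refine (setIntegral_Icc_le_of_le_rpow_mul_deriv hle' hV h0 hθ (fun r hr => hg r (hsub hr))
    (hg'.mono hsub) (fun r hr => hg0 r (hsub hr)) (hh.mono_set hsub)
    fun r hr => hle r (hsub hr)).trans (add_le_add ?_ (mul_le_mul_of_nonneg_left ?_ hθ0))
  · exact mul_le_mul_of_nonneg_left (hgB _ (hsub (right_mem_Icc.2 hle'))) (rpow_nonneg (h0 _) θ)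
  · refine setIntegral_mono_set hX ?_ hsub.eventuallyLE
    exact ae_restrict_of_forall_mem measurableSet_Ioo fun r hr =>
      mul_nonneg (mul_nonneg (rpow_nonneg (h0 r) _) (abs_nonneg _)) (hg0 r hr)

end IntegrationByParts

section RadialTransport

variable {D a b : ℝ} {f w T : ℝ → ℝ}

lemma setIntegral_Iio_radialMeasure (hD : 0 < D) (f : ℝ → ℝ) (a : ℝ) :
    ∫ r in Iio a, f r ∂radialMeasure D = ∫ r in Ioo 0 a, f r * (D * r ^ (D - 1)) := by
  rw [← integral_indicator measurableSet_Iio, integral_radialMeasure hD, ← Ioi_inter_Iio,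
    ← setIntegral_indicator measurableSet_Iio]
  refine integral_congr_ae (Eventually.of_forall fun r => ?_)
  by_cases hr : r ∈ Iio a
  · simp only [indicator_of_mem hr, mul_comm]
  · simp only [indicator_of_notMem hr, mul_zero]

lemma exists_radial_transport (hD : 1 ≤ D) (ha : 0 ≤ a) (hb : 0 ≤ b)
    (hf : ContinuousOn f (Icc 0 a)) (hf0 : ∀ r ∈ Ioo 0 a, 0 < f r)
    (hw : ContinuousOn w (Icc 0 b)) (hw0 : ∀ r ∈ Ioo 0 b, 0 < w r)
    (heq : ∫ r in Iio a, f r ∂radialMeasure D = ∫ r in Iio b, w r ∂radialMeasure D) :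
    ∃ T : ℝ → ℝ, BijOn T (Ioo 0 a) (Ioo 0 b) ∧ ∀ r ∈ Ioo 0 a,
      HasDerivAt T (f r * (D * r ^ (D - 1)) / (w (T r) * (D * T r ^ (D - 1)))) r := by
  have hD0 : 0 < D := zero_lt_one.trans_le hD
  have hpow : Continuous fun r : ℝ => D * r ^ (D - 1) :=
    continuous_const.mul (continuous_id.rpow_const fun _ => Or.inr (sub_nonneg.2 hD))
  simp only [setIntegral_Iio_radialMeasure hD0, ← integral_Ioc_eq_integral_Ioo,
    ← intervalIntegral.integral_of_le ha, ← intervalIntegral.integral_of_le hb] at heq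
  exact exists_bijOn_hasDerivAt_div ha hb (hf.mul hpow.continuousOn)
    (fun r hr => mul_pos (hf0 r hr) (mul_pos hD0 (rpow_pos_of_pos hr.1 _)))
    (hw.mul hpow.continuousOn)
    (fun r hr => mul_pos (hw0 r hr) (mul_pos hD0 (rpow_pos_of_pos hr.1 _))) heq

lemma setIntegral_mul_eq_of_radial_transport (hD : 0 < D) (hf0 : ∀ r ∈ Ioo 0 a, 0 < f r)
    (hw0 : ∀ r ∈ Ioo 0 b, 0 < w r) (hT : BijOn T (Ioo 0 a) (Ioo 0 b))
    (hd : ∀ r ∈ Ioo 0 a,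
      HasDerivAt T (f r * (D * r ^ (D - 1)) / (w (T r) * (D * T r ^ (D - 1)))) r) (φ : ℝ → ℝ) :
    ∫ r in Iio b, φ r * w r ∂radialMeasure D = ∫ r in Iio a, φ (T r) * f r ∂radialMeasure D := by
  simp only [setIntegral_Iio_radialMeasure hD, mul_assoc]
  exact setIntegral_mul_eq_of_transport measurableSet_Ioo hT hd
    (fun r hr => mul_pos (hf0 r hr) (mul_pos hD (rpow_pos_of_pos hr.1 _)))
    (fun r hr => mul_pos (hw0 r hr) (mul_pos hD (rpow_pos_of_pos hr.1 _))) φ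

lemma integrableOn_mul_of_radial_transport (hD : 1 ≤ D) (hf0 : ∀ r ∈ Ioo 0 a, 0 < f r)
    (hw : ContinuousOn w (Icc 0 b)) (hw0 : ∀ r ∈ Ioo 0 b, 0 < w r)
    (hT : BijOn T (Ioo 0 a) (Ioo 0 b)) (hd : ∀ r ∈ Ioo 0 a,
      HasDerivAt T (f r * (D * r ^ (D - 1)) / (w (T r) * (D * T r ^ (D - 1)))) r) {φ : ℝ → ℝ}
    (hφ : ContinuousOn φ (Icc 0 b)) :
    IntegrableOn (fun r => φ (T r) * (f r * (D * r ^ (D - 1)))) (Ioo 0 a) := by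
  have hD0 : 0 < D := zero_lt_one.trans_le hD
  have hpow : Continuous fun r : ℝ => D * r ^ (D - 1) :=
    continuous_const.mul (continuous_id.rpow_const fun _ => Or.inr (sub_nonneg.2 hD))
  refine (integrableOn_mul_iff_of_transport measurableSet_Ioo hT hd
    (fun r hr => mul_pos (hf0 r hr) (mul_pos hD0 (rpow_pos_of_pos hr.1 _)))
    (fun r hr => mul_pos (hw0 r hr) (mul_pos hD0 (rpow_pos_of_pos hr.1 _))) φ).1 ?_
  exact (hφ.mul (hw.mul hpow.continuousOn)).integrableOn_Icc.mono_set Ioo_subset_Icc_self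

end RadialTransport

section Bliss

variable {V T T' : ℝ → ℝ} {L : ℝ≥0} {D P p q θ a b c : ℝ}

lemma integral_rpow_mul_abs_deriv_mul_le_Lp_mul_Lq {ν : Measure ℝ} [IsFiniteMeasure ν]
    (hpq : p.HolderConjugate q) (hV : LipschitzWith L V) (h0 : ∀ r, 0 ≤ V r) {M : ℝ}
    (hM : ∀ᵐ r ∂ν, V r ≤ M) (hθ : 0 ≤ θ) (hT : AEStronglyMeasurable T ν)
    (hT0 : ∀ᵐ r ∂ν, 0 ≤ T r) (hTb : ∀ᵐ r ∂ν, T r ≤ b) :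
    ∫ r, V r ^ θ * |deriv V r| * T r ∂ν ≤
      (∫ r, T r ^ q * V r ^ (θ * q) ∂ν) ^ (1 / q) * (∫ r, |deriv V r| ^ p ∂ν) ^ (1 / p) := by
  have hVT0 : 0 ≤ᵐ[ν] fun r => V r ^ θ * T r := by
    filter_upwards [hT0] with r hr using mul_nonneg (rpow_nonneg (h0 r) θ) hr
  have hVT (s : ℝ≥0∞) : MemLp (fun r => V r ^ θ * T r) s ν := by
    refine MemLp.of_bound ((hV.continuous.rpow_const fun _ => Or.inr hθ).aestronglyMeasurable.mul
      hT) (M ^ θ * b) ?_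
    filter_upwards [hVT0, hM, hT0, hTb] with r hr0 hrM hTr hTrb
    rw [Real.norm_of_nonneg hr0]
    exact mul_le_mul (rpow_le_rpow (h0 r) hrM hθ) hTrb hTr
      (rpow_nonneg ((h0 r).trans hrM) θ)
  have hV' (s : ℝ≥0∞) : MemLp (fun r => |deriv V r|) s ν :=
    MemLp.of_bound (measurable_deriv V).norm.aestronglyMeasurable L (Eventually.of_forall fun r =>
      (norm_norm _).trans_le (norm_deriv_le_of_lipschitz hV))
  have hholder := integral_mul_le_Lp_mul_Lq_of_nonneg hpq.symm hVT0
    (Eventually.of_forall fun r => abs_nonneg (deriv V r)) (hVT _) (hV' _)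
  refine le_of_eq_of_le (integral_congr_ae (Eventually.of_forall fun r => ?_))
    (hholder.trans_eq ?_)
  · exact mul_right_comm _ _ _
  · congr 2
    refine integral_congr_ae ?_
    filter_upwards [hT0] with r hr
    rw [mul_rpow (rpow_nonneg (h0 r) θ) hr, ← rpow_mul (h0 r), mul_comm]

lemma one_add_rpow_mul_le_of_radial_transport {r v τ τ' : ℝ} (hD : 1 < D)
    (hPθ : P * (1 - 1 / D) = θ) (hc : 0 < c) (hv : 0 < v) (hr : 0 < r) (hτ : 0 < τ)
    (hτ' : τ' = c * v ^ P * (D * r ^ (D - 1)) / ((1 + τ ^ q) ^ (-D) * (D * τ ^ (D - 1)))) :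
    (1 + τ ^ q) * (c * v ^ P * (D * r ^ (D - 1))) ≤
      v ^ θ * (1 / D * c ^ (1 - 1 / D) * D *
        ((D - 1) * r ^ (D - 2) * τ + r ^ (D - 1) * τ')) := by
  have hD0 : 0 < D := zero_lt_one.trans hD
  have hX : (c * v ^ P) ^ (1 - 1 / D) = c ^ (1 - 1 / D) * v ^ θ := by
    rw [mul_rpow hc.le (rpow_nonneg hv.le P), ← rpow_mul hv.le, hPθ]
  have htransport := mul_le_of_radial_transport (X := c * v ^ P) (r := r) (m := 1 + τ ^ q)
    (τ := τ) (τ' := τ') hD (by positivity) hr (by positivity) hτ (hτ' ▸ by positivity) (by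
      rw [hτ']
      field_simp)
  rw [hX] at htransport
  calc (1 + τ ^ q) * (c * v ^ P * (D * r ^ (D - 1)))
      = D * ((1 + τ ^ q) * (c * v ^ P * r ^ (D - 1))) := by ring
    _ ≤ D * (1 / D * (c ^ (1 - 1 / D) * v ^ θ) *
        ((D - 1) * r ^ (D - 2) * τ + r ^ (D - 1) * τ')) :=
      mul_le_mul_of_nonneg_left htransport hD0.le
    _ = _ := by ring

lemma continuousOn_transport_deriv {f w : ℝ → ℝ} {s t : Set ℝ} (hf : ContinuousOn f s)
    (hw : ContinuousOn w t) (hw0 : ∀ x ∈ t, w x ≠ 0) (hT : MapsTo T s t)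
    (hd : ∀ x ∈ s, HasDerivAt T (f x / w (T x)) x) :
    ContinuousOn (fun x => f x / w (T x)) s :=
  hf.div (hw.comp (fun _ hx => (hd _ hx).continuousAt.continuousWithinAt) hT)
    fun _ hx => hw0 _ (hT hx)

lemma continuousOn_rpow_Ioo_zero (s b : ℝ) : ContinuousOn (fun r : ℝ => r ^ s) (Ioo 0 b) :=
  continuousOn_id.rpow_const fun _ hr => Or.inl hr.1.ne'

lemma continuousOn_one_add_rpow_transport_deriv (hD : 0 < D) (hV : Continuous V)
    (hpos : ∀ r ∈ Ioo 0 a, 0 < V r) (hT : MapsTo T (Ioo 0 a) (Ioo 0 b))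
    (hd : ∀ r ∈ Ioo 0 a, HasDerivAt T (c * V r ^ P *
      (D * r ^ (D - 1)) / ((1 + T r ^ q) ^ (-D) * (D * T r ^ (D - 1)))) r) :
    ContinuousOn (fun r => c * V r ^ P * (D * r ^ (D - 1)) /
      ((1 + T r ^ q) ^ (-D) * (D * T r ^ (D - 1)))) (Ioo 0 a) := by
  have hm (r : ℝ) (hr : r ∈ Ioo 0 b) : 0 < 1 + r ^ q := by have := hr.1; positivity
  refine continuousOn_transport_deriv (w := fun τ => (1 + τ ^ q) ^ (-D) * (D * τ ^ (D - 1)))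
    ((continuousOn_const.mul (hV.continuousOn.rpow_const fun r hr => Or.inl (hpos r hr).ne')).mul
      (continuousOn_const.mul (continuousOn_rpow_Ioo_zero _ a)))
    (((continuousOn_const.add (continuousOn_rpow_Ioo_zero q b)).rpow_const fun r hr =>
      Or.inl (hm r hr).ne').mul (continuousOn_const.mul (continuousOn_rpow_Ioo_zero _ b)))
    (fun r hr => ?_) hT hd
  have := hr.1
  have := hm r hr
  positivity

lemma setIntegral_one_add_rpow_mul_transport_le (hD : 1 < D) (hθ1 : 1 ≤ θ)
    (hPθ : P * (1 - 1 / D) = θ) (hV : LipschitzWith L V) (h0 : ∀ r, 0 ≤ V r) (ha : 0 < a)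
    (hpos : ∀ r ∈ Ioo 0 a, 0 < V r) (hVa : V a = 0) (hc : 0 < c)
    (hT : MapsTo T (Ioo 0 a) (Ioo 0 b)) (hd : ∀ r ∈ Ioo 0 a, HasDerivAt T (c * V r ^ P *
      (D * r ^ (D - 1)) / ((1 + T r ^ q) ^ (-D) * (D * T r ^ (D - 1)))) r)
    (hi : IntegrableOn (fun r => (1 + T r ^ q) * (c * V r ^ P * (D * r ^ (D - 1)))) (Ioo 0 a)) :
    ∫ r in Ioo 0 a, (1 + T r ^ q) * (c * V r ^ P * (D * r ^ (D - 1))) ≤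
      1 / D * c ^ (1 - 1 / D) *
        (θ * ∫ r in Iio a, V r ^ (θ - 1) * |deriv V r| * T r ∂radialMeasure D) := by
  have hD1 : 0 < D - 1 := sub_pos.2 hD
  have hD0 : 0 < D := zero_lt_one.trans hD
  set C := 1 / D * c ^ (1 - 1 / D) with hC
  set T' : ℝ → ℝ := fun r =>
    c * V r ^ P * (D * r ^ (D - 1)) / ((1 + T r ^ q) ^ (-D) * (D * T r ^ (D - 1)))
  have hTc : ContinuousOn T (Ioo 0 a) := fun r hr => (hd r hr).continuousAt.continuousWithinAt
  have hpow (s : ℝ) : ContinuousOn (fun r : ℝ => r ^ s) (Ioo 0 a) := continuousOn_rpow_Ioo_zero s a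
  have hT' : ContinuousOn T' (Ioo 0 a) :=
    continuousOn_one_add_rpow_transport_deriv hD0 hV.continuous hpos hT hd
  have hg (r) (hr : r ∈ Ioo 0 a) : HasDerivAt (fun r => C * D * (r ^ (D - 1) * T r))
      (C * D * ((D - 1) * r ^ (D - 2) * T r + r ^ (D - 1) * T' r)) r := by
    have hpow := hasDerivAt_rpow_const (x := r) (p := D - 1) (Or.inl hr.1.ne')
    rw [show D - 1 - 1 = D - 2 by ring] at hpow
    exact (hpow.mul (hd r hr)).const_mul (C * D)
  have hg' : ContinuousOn (fun r => C * D * ((D - 1) * r ^ (D - 2) * T r + r ^ (D - 1) * T' r))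
      (Ioo 0 a) :=
    continuousOn_const.mul (((continuousOn_const.mul (hpow _)).mul hTc).add ((hpow _).mul hT'))
  have hgB (r) (hr : r ∈ Ioo 0 a) : C * D * (r ^ (D - 1) * T r) ≤ C * D * (a ^ (D - 1) * b) :=
    mul_le_mul_of_nonneg_left (mul_le_mul (rpow_le_rpow hr.1.le hr.2.le hD1.le) (hT hr).2.le
      (hT hr).1.le (by positivity)) (by positivity)
  refine (setIntegral_Ioo_le_of_le_rpow_mul_deriv ha hV h0 hVa hθ1 hg hg' (fun r hr => ?_) hgB hi
    fun r hr => one_add_rpow_mul_le_of_radial_transport hD hPθ hc (hpos r hr) hr.1 (hT hr).1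
      rfl).trans_eq ?_
  · have := (hT hr).1
    have := hr.1
    positivity
  · rw [setIntegral_Iio_radialMeasure hD0, mul_left_comm C θ, ← integral_const_mul C]
    congr 1
    refine setIntegral_congr_fun measurableSet_Ioo fun r _ => ?_
    simp only [hC]
    ring

lemma setIntegral_rpow_mul_abs_deriv_mul_le_Lp_mul_Lq (hD : 0 < D) (hpq : p.HolderConjugate q)
    (hV : LipschitzWith L V) (h0 : ∀ r, 0 ≤ V r) (hθ : 0 ≤ θ) (ha : 0 ≤ a)
    (hTc : ContinuousOn T (Ioo 0 a)) (hT : MapsTo T (Ioo 0 a) (Ioo 0 b)) :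
    ∫ r in Iio a, V r ^ θ * |deriv V r| * T r ∂radialMeasure D ≤
      (∫ r in Iio a, T r ^ q * V r ^ (θ * q) ∂radialMeasure D) ^ (1 / q) *
        (∫ r in Iio a, |deriv V r| ^ p ∂radialMeasure D) ^ (1 / p) := by
  have hν : ((radialMeasure D).restrict (Iio a)).restrict (Ioi 0) =
      (radialMeasure D).restrict (Iio a) :=
    Measure.restrict_eq_self_of_ae_mem (ae_restrict_of_ae (ae_radialMeasure_pos D))
  rw [Measure.restrict_restrict measurableSet_Ioi, Ioi_inter_Iio] at hν
  obtain ⟨M, hM⟩ := isCompact_Icc.exists_bound_of_continuousOn (s := Icc 0 a)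
    hV.continuous.continuousOn
  have hfin : IsFiniteMeasure ((radialMeasure D).restrict (Iio a)) :=
    isFiniteMeasure_restrict.2 (radialMeasure_Iio_ne_top hD ha)
  rw [← hν] at hfin ⊢
  exact integral_rpow_mul_abs_deriv_mul_le_Lp_mul_Lq hpq hV h0
    (ae_restrict_of_forall_mem measurableSet_Ioo fun r hr =>
      (le_abs_self _).trans (hM r (Ioo_subset_Icc_self hr))) hθ
    (hTc.aestronglyMeasurable measurableSet_Ioo)
    (ae_restrict_of_forall_mem measurableSet_Ioo fun r hr => (hT hr).1.le)
    (ae_restrict_of_forall_mem measurableSet_Ioo fun r hr => (hT hr).2.le)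

lemma setIntegral_one_add_rpow_le_of_mass_eq (hpq : p.HolderConjugate q) (hD : 1 < D)
    (hθ1 : 1 ≤ θ) (hPθ : P * (1 - 1 / D) = θ) (hθq : (θ - 1) * q = P) (hV : LipschitzWith L V)
    (h0 : ∀ r, 0 ≤ V r) (ha : 0 < a) (hpos : ∀ r ∈ Ioo 0 a, 0 < V r) (hVa : V a = 0) (hc : 0 < c)
    (hb : 0 ≤ b) (hmass : ∫ r in Iio a, c * V r ^ P ∂radialMeasure D =
      ∫ r in Iio b, (1 + r ^ q) ^ (-D) ∂radialMeasure D) :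
    ∫ r in Iio b, (1 + r ^ q) * (1 + r ^ q) ^ (-D) ∂radialMeasure D ≤
      1 / D * c ^ (1 - 1 / D) *
        (θ * (((∫ r in Iio b, r ^ q * (1 + r ^ q) ^ (-D) ∂radialMeasure D) / c) ^ (1 / q) *
          (∫ r in Iio a, |deriv V r| ^ p ∂radialMeasure D) ^ (1 / p))) := by
  have hD0 : 0 < D := zero_lt_one.trans hD
  have hP0 : 0 ≤ P := hθq ▸ mul_nonneg (sub_nonneg.2 hθ1) hpq.symm.nonneg
  have hbase (r : ℝ) (hr : 0 ≤ r) : 0 < 1 + r ^ q := by positivity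
  have hrpow : Continuous fun r : ℝ => r ^ q :=
    continuous_id.rpow_const fun _ => Or.inr hpq.symm.nonneg
  have hw : ContinuousOn (fun r : ℝ => (1 + r ^ q) ^ (-D)) (Icc 0 b) :=
    (continuous_const.add hrpow).continuousOn.rpow_const fun r hr => Or.inl (hbase r hr.1).ne'
  have hw0 (r : ℝ) (hr : r ∈ Ioo 0 b) : 0 < (1 + r ^ q) ^ (-D) :=
    rpow_pos_of_pos (hbase r hr.1.le) _
  have hf : Continuous fun r => c * V r ^ P :=
    continuous_const.mul (hV.continuous.rpow_const fun _ => Or.inr hP0)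
  have hf0 (r : ℝ) (hr : r ∈ Ioo 0 a) : 0 < c * V r ^ P :=
    mul_pos hc (rpow_pos_of_pos (hpos r hr) P)
  obtain ⟨T, hT, hd⟩ := exists_radial_transport hD.le ha.le hb hf.continuousOn hf0 hw hw0 hmass
  have hTq : ∫ r in Iio b, r ^ q * (1 + r ^ q) ^ (-D) ∂radialMeasure D =
      c * ∫ r in Iio a, T r ^ q * V r ^ ((θ - 1) * q) ∂radialMeasure D := by
    rw [setIntegral_mul_eq_of_radial_transport hD0 hf0 hw0 hT hd fun r => r ^ q, hθq,
      ← integral_const_mul]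
    simp only [mul_left_comm]
  rw [setIntegral_mul_eq_of_radial_transport hD0 hf0 hw0 hT hd fun r => 1 + r ^ q, hTq,
    mul_div_cancel_left₀ _ hc.ne', setIntegral_Iio_radialMeasure hD0]
  simp only [mul_assoc (1 + T _ ^ q)]
  refine (setIntegral_one_add_rpow_mul_transport_le hD hθ1 hPθ hV h0 ha hpos hVa hc hT.mapsTo hd
    (integrableOn_mul_of_radial_transport hD.le hf0 hw hw0 hT hd
      (continuous_const.add hrpow).continuousOn)).trans ?_
  gcongr
  exact setIntegral_rpow_mul_abs_deriv_mul_le_Lp_mul_Lq hD0 hpq hV h0 (sub_nonneg.2 hθ1) ha.le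
    (fun r hr => (hd r hr).continuousAt.continuousWithinAt) hT.mapsTo

end Bliss

section BlissProfile

lemma lintegral_ofReal_eq_ofReal_integral_of_pos {α : Type*} [MeasurableSpace α] {μ : Measure α}
    {f : α → ℝ} (hf : 0 ≤ᵐ[μ] f) (hpos : 0 < ∫ x, f x ∂μ) :
    ∫⁻ x, ENNReal.ofReal (f x) ∂μ = ENNReal.ofReal (∫ x, f x ∂μ) :=
  (ofReal_integral_eq_lintegral_ofReal (Integrable.of_integral_ne_zero hpos.ne') hf).symm

lemma lintegral_rpow_mul_exp_neg_mul_Ioi {b c : ℝ} (hb : 0 < b) (hc : 0 < c) :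
    ∫⁻ t in Ioi (0 : ℝ), ENNReal.ofReal (t ^ (b - 1) * exp (-(c * t))) =
      ENNReal.ofReal (c ^ (-b) * Gamma b) := by
  have hint : ∫ t in Ioi (0 : ℝ), t ^ (b - 1) * exp (-(c * t)) = c ^ (-b) * Gamma b := by
    rw [integral_rpow_mul_exp_neg_mul_Ioi hb hc, one_div, inv_rpow hc.le, rpow_neg hc.le]
  rw [lintegral_ofReal_eq_ofReal_integral_of_pos _ (hint ▸ by positivity), hint]
  refine ae_restrict_of_forall_mem measurableSet_Ioi fun t (ht : 0 < t) => ?_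
  change 0 ≤ _
  positivity

lemma lintegral_one_add_rpow_neg {α : Type*} [MeasurableSpace α] {μ : Measure α} [SFinite μ]
    {g : α → ℝ} (hg : Measurable g) (hg0 : ∀ᵐ x ∂μ, 0 ≤ g x) {b : ℝ} (hb : 0 < b) :
    ∫⁻ x, ENNReal.ofReal ((1 + g x) ^ (-b)) ∂μ = ENNReal.ofReal (Gamma b)⁻¹ *
      ∫⁻ t in Ioi (0 : ℝ), ENNReal.ofReal (t ^ (b - 1) * exp (-t)) *
        ∫⁻ x, ENNReal.ofReal (exp (-t * g x)) ∂μ := by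
  have hΓ := Gamma_pos_of_pos hb
  have hfactor (t x) : ENNReal.ofReal (t ^ (b - 1) * exp (-((1 + g x) * t))) =
      ENNReal.ofReal (t ^ (b - 1) * exp (-t)) * ENNReal.ofReal (exp (-t * g x)) := by
    rw [← ENNReal.ofReal_mul' (exp_pos _).le, mul_assoc, ← exp_add]
    ring_nf
  have hmeas : Measurable fun z : α × ℝ =>
      ENNReal.ofReal (z.2 ^ (b - 1) * exp (-((1 + g z.1) * z.2))) := by fun_prop
  have hpoint : ∀ᵐ x ∂μ, ENNReal.ofReal ((1 + g x) ^ (-b)) = ENNReal.ofReal (Gamma b)⁻¹ *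
      ∫⁻ t in Ioi (0 : ℝ), ENNReal.ofReal (t ^ (b - 1) * exp (-((1 + g x) * t))) := by
    filter_upwards [hg0] with x hx
    rw [lintegral_rpow_mul_exp_neg_mul_Ioi hb (by positivity), ← ENNReal.ofReal_mul (by positivity),
      mul_comm (_ ^ _), inv_mul_cancel_left₀ hΓ.ne']
  rw [lintegral_congr_ae hpoint, lintegral_const_mul _ hmeas.lintegral_prod_right',
    lintegral_lintegral_swap hmeas.aemeasurable]
  congr 1
  refine lintegral_congr fun t => ?_
  simp only [hfactor]
  exact lintegral_const_mul _ (by fun_prop)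

variable {D b q : ℝ}

lemma lintegral_exp_neg_mul_rpow_radialMeasure (hD : 0 < D) (hq : 0 < q) {t : ℝ} (ht : 0 < t) :
    ∫⁻ r, ENNReal.ofReal (exp (-t * r ^ q)) ∂radialMeasure D =
      ENNReal.ofReal (t ^ (-(D / q)) * Gamma (1 + D / q)) := by
  have hint : ∫ r, exp (-t * r ^ q) ∂radialMeasure D = t ^ (-(D / q)) * Gamma (1 + D / q) := by
    rw [integral_radialMeasure hD, add_comm, Gamma_add_one (by positivity)]
    simp only [mul_assoc]
    rw [integral_const_mul, integral_rpow_mul_exp_neg_mul_rpow hq (by linarith) ht, sub_add_cancel,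
      neg_div]
    ring
  rw [lintegral_ofReal_eq_ofReal_integral_of_pos (Eventually.of_forall fun _ => (exp_pos _).le)
    (hint ▸ by positivity), hint]

lemma lintegral_one_add_rpow_rpow_neg_radialMeasure (hD : 0 < D) (hq : 0 < q) (hb : D / q < b) :
    ∫⁻ r, ENNReal.ofReal ((1 + r ^ q) ^ (-b)) ∂radialMeasure D =
      ENNReal.ofReal (Gamma (1 + D / q) * Gamma (b - D / q) / Gamma b) := by
  have hb0 : 0 < b := (div_pos hD hq).trans hb
  have hΓ : 0 < Gamma (1 + D / q) := Gamma_pos_of_pos (by positivity)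
  have hr0 : ∀ᵐ r ∂radialMeasure D, 0 ≤ r ^ q := by
    filter_upwards [ae_radialMeasure_pos D] with r hr using rpow_nonneg hr.le q
  have hinner (t : ℝ) (ht : t ∈ Ioi 0) : ENNReal.ofReal (t ^ (b - 1) * exp (-t)) *
      ∫⁻ r, ENNReal.ofReal (exp (-t * r ^ q)) ∂radialMeasure D =
      ENNReal.ofReal (Gamma (1 + D / q)) *
        ENNReal.ofReal (t ^ (b - D / q - 1) * exp (-(1 * t))) := by
    have ht0 : 0 < t := ht
    rw [lintegral_exp_neg_mul_rpow_radialMeasure hD hq ht, ← ENNReal.ofReal_mul (by positivity),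
      ← ENNReal.ofReal_mul hΓ.le, show b - D / q - 1 = b - 1 + -(D / q) by ring, rpow_add ht0,
      one_mul]
    ring_nf
  rw [lintegral_one_add_rpow_neg (by fun_prop) hr0 hb0,
    setLIntegral_congr_fun measurableSet_Ioi hinner, lintegral_const_mul _ (by fun_prop),
    lintegral_rpow_mul_exp_neg_mul_Ioi (sub_pos.2 hb) one_pos, one_rpow, one_mul,
    ← ENNReal.ofReal_mul hΓ.le, ← ENNReal.ofReal_mul (by positivity), inv_mul_eq_div]

lemma one_add_rpow_rpow_neg_nonneg_radialMeasure :
    0 ≤ᵐ[radialMeasure D] fun r => (1 + r ^ q) ^ (-b) := by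
  filter_upwards [ae_radialMeasure_pos D] with r hr
  change 0 ≤ _
  positivity

lemma integrable_one_add_rpow_rpow_neg_radialMeasure (hD : 0 < D) (hq : 0 < q) (hb : D / q < b) :
    Integrable (fun r => (1 + r ^ q) ^ (-b)) (radialMeasure D) := by
  refine ⟨Measurable.aestronglyMeasurable (by fun_prop), ?_⟩
  rw [hasFiniteIntegral_iff_ofReal one_add_rpow_rpow_neg_nonneg_radialMeasure,
    lintegral_one_add_rpow_rpow_neg_radialMeasure hD hq hb]
  exact ENNReal.ofReal_lt_top

lemma integral_one_add_rpow_rpow_neg_radialMeasure (hD : 0 < D) (hq : 0 < q) (hb : D / q < b) :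
    ∫ r, (1 + r ^ q) ^ (-b) ∂radialMeasure D =
      Gamma (1 + D / q) * Gamma (b - D / q) / Gamma b := by
  have := Gamma_pos_of_pos (sub_pos.2 hb)
  have := (div_pos hD hq).trans hb
  rw [integral_eq_lintegral_of_nonneg_ae one_add_rpow_rpow_neg_nonneg_radialMeasure
      (Measurable.aestronglyMeasurable (by fun_prop)),
    lintegral_one_add_rpow_rpow_neg_radialMeasure hD hq hb, ENNReal.toReal_ofReal (by positivity)]

variable {p : ℝ}

lemma one_add_rpow_mul_rpow_neg_ae_eq :
    (fun r => (1 + r ^ q) * (1 + r ^ q) ^ (-D)) =ᵐ[radialMeasure D]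
      fun r => (1 + r ^ q) ^ (-(D - 1)) := by
  filter_upwards [ae_radialMeasure_pos D] with r hr
  rw [neg_sub, sub_eq_add_neg, rpow_add (by positivity), rpow_one]

lemma div_conjugate_lt_sub_one (hpq : p.HolderConjugate q) (hpD : p < D) : D / q < D - 1 := by
  have hp := hpq.pos
  rw [hpq.conjugate_eq]
  field_simp
  linarith

lemma sub_div_conjugate (hpq : p.HolderConjugate q) : D - D / q = D / p := by
  rw [div_eq_mul_inv, div_eq_mul_inv, ← hpq.one_sub_inv, mul_sub, mul_one, sub_sub_cancel]

lemma integral_one_add_rpow_rpow_neg_eq_Gamma (hpq : p.HolderConjugate q) (hpD : p < D) :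
    ∫ r, (1 + r ^ q) ^ (-D) ∂radialMeasure D =
      Gamma (1 + D / q) * Gamma (D / p) / Gamma D := by
  have hD : 0 < D := hpq.pos.trans hpD
  rw [integral_one_add_rpow_rpow_neg_radialMeasure hD hpq.symm.pos
    (div_lt_self hD hpq.symm.lt), sub_div_conjugate hpq]

lemma integral_one_add_rpow_rpow_neg_pos (hpq : p.HolderConjugate q) (hpD : p < D) :
    0 < ∫ r, (1 + r ^ q) ^ (-D) ∂radialMeasure D := by
  have hp := hpq.pos
  have hq := hpq.symm.pos
  have hD : 0 < D := hp.trans hpD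
  rw [integral_one_add_rpow_rpow_neg_eq_Gamma hpq hpD]
  positivity

lemma integral_one_add_rpow_mul_rpow_neg (hpq : p.HolderConjugate q) (hpD : p < D) :
    ∫ r, (1 + r ^ q) * (1 + r ^ q) ^ (-D) ∂radialMeasure D =
      p * (D - 1) / (D - p) * ∫ r, (1 + r ^ q) ^ (-D) ∂radialMeasure D := by
  have hp := hpq.pos
  have hD1 : 1 < D := hpq.lt.trans hpD
  have hDp : 0 < D / p - 1 := sub_pos.2 ((one_lt_div hp).2 hpD)
  rw [integral_congr_ae one_add_rpow_mul_rpow_neg_ae_eq,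
    integral_one_add_rpow_rpow_neg_radialMeasure (by linarith) hpq.symm.pos
      (div_conjugate_lt_sub_one hpq hpD), integral_one_add_rpow_rpow_neg_eq_Gamma hpq hpD,
    sub_right_comm, sub_div_conjugate hpq, ← sub_add_cancel (D / p) 1, Gamma_add_one hDp.ne',
    add_sub_cancel_right, ← sub_add_cancel D 1, Gamma_add_one (sub_pos.2 hD1).ne', sub_add_cancel]
  have := sub_pos.2 hpD
  have := sub_pos.2 hD1
  have := Gamma_pos_of_pos (sub_pos.2 hD1)
  field_simp

lemma integrable_one_add_rpow_mul_rpow_neg (hpq : p.HolderConjugate q) (hpD : p < D) :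
    Integrable (fun r => (1 + r ^ q) * (1 + r ^ q) ^ (-D)) (radialMeasure D) :=
  (integrable_one_add_rpow_rpow_neg_radialMeasure (hpq.pos.trans hpD) hpq.symm.pos
    (div_conjugate_lt_sub_one hpq hpD)).congr one_add_rpow_mul_rpow_neg_ae_eq.symm

lemma integrable_one_add_rpow_rpow_neg (hpq : p.HolderConjugate q) (hpD : p < D) :
    Integrable (fun r => (1 + r ^ q) ^ (-D)) (radialMeasure D) :=
  have hD := hpq.pos.trans hpD
  integrable_one_add_rpow_rpow_neg_radialMeasure hD hpq.symm.pos (div_lt_self hD hpq.symm.lt)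

lemma rpow_mul_one_add_rpow_rpow_neg_eq (r : ℝ) :
    r ^ q * (1 + r ^ q) ^ (-D) = (1 + r ^ q) * (1 + r ^ q) ^ (-D) - (1 + r ^ q) ^ (-D) := by
  ring

lemma integrable_rpow_mul_one_add_rpow_rpow_neg (hpq : p.HolderConjugate q) (hpD : p < D) :
    Integrable (fun r => r ^ q * (1 + r ^ q) ^ (-D)) (radialMeasure D) := by
  simp only [rpow_mul_one_add_rpow_rpow_neg_eq]
  exact (integrable_one_add_rpow_mul_rpow_neg hpq hpD).sub
    (integrable_one_add_rpow_rpow_neg hpq hpD)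

lemma integral_rpow_mul_one_add_rpow_rpow_neg (hpq : p.HolderConjugate q) (hpD : p < D) :
    ∫ r, r ^ q * (1 + r ^ q) ^ (-D) ∂radialMeasure D =
      (∫ r, (1 + r ^ q) ^ (-D) ∂radialMeasure D) * (D * ((p - 1) / (D - p))) := by
  simp only [rpow_mul_one_add_rpow_rpow_neg_eq]
  rw [integral_sub (integrable_one_add_rpow_mul_rpow_neg hpq hpD)
    (integrable_one_add_rpow_rpow_neg hpq hpD), integral_one_add_rpow_mul_rpow_neg hpq hpD]
  have := sub_pos.2 hpD
  field_simp
  ring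

end BlissProfile

section BlissInequality

variable {V : ℝ → ℝ} {L : ℝ≥0} {D p q a : ℝ}

lemma tendsto_setIntegral_Iio_atTop {μ : Measure ℝ} {f : ℝ → ℝ} (hf : Integrable f μ) :
    Tendsto (fun N => ∫ r in Iio N, f r ∂μ) atTop (𝓝 (∫ r, f r ∂μ)) :=
  (aecover_Iio tendsto_id).integral_tendsto_of_countably_generated hf

lemma rpow_le_of_bliss_limit {κ J I G : ℝ} (hpq : p.HolderConjugate q) (hD : 0 < D)
    (hκ : 0 ≤ κ) (hJ : 0 < J) (hI : 0 < I)
    (h : J ≤ 1 / D * (J / I) ^ (1 - 1 / D) * ((J * (D * κ) / (J / I)) ^ (1 / q) * G ^ (1 / p))) :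
    I ^ ((D - p) / (D * p)) ≤ D ^ (-1 / p) * J ^ (-1 / D) * κ ^ (1 / q) * G ^ (1 / p) := by
  have hp := hpq.pos
  have hq : 1 / q = 1 - 1 / p := by rw [one_div, one_div, hpq.one_sub_inv]
  have hJD : J ^ (1 - 1 / D) = J * J ^ (-1 / D) := by
    rw [sub_eq_add_neg, ← neg_div, rpow_add hJ, rpow_one]
  have hIq : I ^ (1 / q) = I ^ (1 - 1 / D) / I ^ ((D - p) / (D * p)) := by
    rw [← rpow_sub hI, hq]
    congr 1
    field_simp
    ring
  have hDq : D ^ (1 / q) = D * D ^ (-1 / p) := by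
    rw [hq, sub_eq_add_neg, ← neg_div, rpow_add hD, rpow_one]
  have hcancel : J * (D * κ) / (J / I) = I * (D * κ) := by field_simp
  have hI1 : 0 < I ^ (1 - 1 / D) := rpow_pos_of_pos hI _
  have hIP : 0 < I ^ ((D - p) / (D * p)) := rpow_pos_of_pos hI _
  rw [hcancel, mul_rpow hI.le (by positivity), mul_rpow hD.le hκ, div_rpow hJ.le hI.le, hJD, hIq,
    hDq] at h
  have hratio : J * 1 ≤ J * ((D ^ (-1 / p) * J ^ (-1 / D) * κ ^ (1 / q) * G ^ (1 / p)) /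
      I ^ ((D - p) / (D * p))) := by
    rw [mul_one]
    refine h.trans_eq ?_
    field_simp
  exact (one_le_div hIP).1 (le_of_mul_le_mul_left hratio hJ)

lemma integral_one_add_rpow_rpow_neg_le_of_pos (hpq : p.HolderConjugate q) (hpD : p < D)
    (hV : LipschitzWith L V) (h0 : ∀ r, 0 ≤ V r) (ha : 0 < a) (hpos : ∀ r ∈ Ioo 0 a, 0 < V r)
    (hVa : V a = 0) {J I : ℝ} (hJ : ∫ r, (1 + r ^ q) ^ (-D) ∂radialMeasure D = J)
    (hI : ∫ r in Iio a, V r ^ (D * p / (D - p)) ∂radialMeasure D = I) (hI0 : 0 < I) :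
    J ≤ 1 / D * (J / I) ^ (1 - 1 / D) * ((J * (D * ((p - 1) / (D - p))) / (J / I)) ^ (1 / q) *
      (∫ r in Iio a, |deriv V r| ^ p ∂radialMeasure D) ^ (1 / p)) := by
  have hp := hpq.pos
  have hDp : 0 < D - p := sub_pos.2 hpD
  have hD1 : 1 < D := hpq.lt.trans hpD
  set θ := p * (D - 1) / (D - p) with hθ
  have hθ1 : 1 ≤ θ := by
    rw [hθ, one_le_div hDp]
    nlinarith [hpq.lt]
  have hPθ : D * p / (D - p) * (1 - 1 / D) = θ := by
    rw [hθ]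
    field_simp
  have hθq : (θ - 1) * q = D * p / (D - p) := by
    have := hpq.sub_one_pos
    rw [hθ, hpq.conjugate_eq]
    field_simp
    ring
  have hJ0 : 0 < J := hJ ▸ integral_one_add_rpow_rpow_neg_pos hpq hpD
  have hw := tendsto_setIntegral_Iio_atTop (integrable_one_add_rpow_rpow_neg hpq hpD)
  have hw₁ := tendsto_setIntegral_Iio_atTop (integrable_one_add_rpow_mul_rpow_neg hpq hpD)
  have hw₂ := tendsto_setIntegral_Iio_atTop (integrable_rpow_mul_one_add_rpow_rpow_neg hpq hpD)
  rw [hJ] at hw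
  rw [integral_one_add_rpow_mul_rpow_neg hpq hpD, hJ] at hw₁
  rw [integral_rpow_mul_one_add_rpow_rpow_neg hpq hpD, hJ] at hw₂
  have hc0 : J / I ≠ 0 := (div_pos hJ0 hI0).ne'
  have hc := hw.div_const I
  have hright := ((hc.rpow_const (p := 1 - 1 / D) (Or.inl hc0)).const_mul (1 / D)).mul
    ((((hw₂.div hc hc0).rpow_const (p := 1 / q) (Or.inr hpq.symm.one_div_nonneg)).mul_const
      ((∫ r in Iio a, |deriv V r| ^ p ∂radialMeasure D) ^ (1 / p))).const_mul θ)
  have hlim := le_of_tendsto_of_tendsto hw₁ hright (by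
    filter_upwards [eventually_ge_atTop 0, hw.eventually (lt_mem_nhds hJ0)] with N hN hJN
    refine setIntegral_one_add_rpow_le_of_mass_eq hpq hD1 hθ1 hPθ hθq hV h0 ha hpos hVa
      (div_pos hJN hI0) hN ?_
    rw [integral_const_mul, hI, div_mul_cancel₀ _ hI0.ne'])
  rw [mul_left_comm _ θ] at hlim
  exact le_of_mul_le_mul_left hlim (zero_lt_one.trans_le hθ1)

lemma integral_rpow_le_mul_integral_abs_deriv_rpow (hpq : p.HolderConjugate q) (hpD : p < D)
    (hV : LipschitzWith L V) (h0 : ∀ r, 0 ≤ V r) (ha : 0 < a) (hpos : ∀ r ∈ Ioo 0 a, 0 < V r)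
    (hVa : ∀ r, a ≤ r → V r = 0) :
    (∫ r, V r ^ (D * p / (D - p)) ∂radialMeasure D) ^ ((D - p) / (D * p)) ≤
      D ^ (-1 / p) * (∫ r, (1 + r ^ q) ^ (-D) ∂radialMeasure D) ^ (-1 / D) *
        ((p - 1) / (D - p)) ^ (1 / q) * (∫ r, |deriv V r| ^ p ∂radialMeasure D) ^ (1 / p) := by
  have hp := hpq.pos
  have hp1 := hpq.sub_one_pos
  have hD : 0 < D := hp.trans hpD
  have := sub_pos.2 hpD
  have hVP : ∫ r, V r ^ (D * p / (D - p)) ∂radialMeasure D =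
      ∫ r in Iio a, V r ^ (D * p / (D - p)) ∂radialMeasure D :=
    (setIntegral_eq_integral_of_forall_compl_eq_zero fun r hr => by
      rw [hVa r (not_lt.1 hr), zero_rpow (by positivity)]).symm
  have hV' : ∫ r, |deriv V r| ^ p ∂radialMeasure D =
      ∫ r in Iio a, |deriv V r| ^ p ∂radialMeasure D :=
    (setIntegral_eq_integral_of_forall_compl_eq_zero fun r hr => by
      rw [deriv_eq_zero_of_nonneg h0 (hVa r (not_lt.1 hr)), abs_zero, zero_rpow hp.ne']).symm
  rw [hVP, hV']
  have hJ0 := integral_one_add_rpow_rpow_neg_pos hpq hpD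
  have : 0 ≤ ∫ r in Iio a, |deriv V r| ^ p ∂radialMeasure D :=
    integral_nonneg fun r => rpow_nonneg (abs_nonneg _) p
  have hI0 : 0 ≤ ∫ r in Iio a, V r ^ (D * p / (D - p)) ∂radialMeasure D :=
    integral_nonneg fun r => rpow_nonneg (h0 r) _
  obtain hI | hI := hI0.eq_or_lt
  · rw [← hI, zero_rpow (by positivity)]
    positivity
  · exact rpow_le_of_bliss_limit hpq hD (by positivity) hJ0 hI
      (integral_one_add_rpow_rpow_neg_le_of_pos hpq hpD hV h0 ha hpos (hVa a le_rfl) rfl rfl hI)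

end BlissInequality

section SharpSobolev

/-- The factor of the best Sobolev constant that depends only on the homogeneous dimension `D` and
the exponent `p`; the other factor is a power of the volume of the unit ball. It is written with
`1 - 1 / p` in place of `1 / p'` so that `p = 1` needs no separate formula (`0 ^ 0 = 1` there). -/
def sobolevConstant (D p : ℝ) : ℝ :=
  D ^ (-1 / p) * (Gamma (1 + D * (1 - 1 / p)) * Gamma (D / p) / Gamma D) ^ (-1 / D) *
    ((p - 1) / (D - p)) ^ (1 - 1 / p)

variable {D p : ℝ}

lemma Gamma_one_add_mul_one_sub_one_div_pos (hD : 0 ≤ D) (hp1 : 1 ≤ p) :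
    0 < Gamma (1 + D * (1 - 1 / p)) := by
  have : 1 / p ≤ 1 := (div_le_one (zero_lt_one.trans_le hp1)).2 hp1
  exact Gamma_pos_of_pos (add_pos_of_pos_of_nonneg one_pos (mul_nonneg hD (sub_nonneg.2 this)))

lemma sobolevConstant_nonneg (hp1 : 1 ≤ p) (hpD : p < D) : 0 ≤ sobolevConstant D p := by
  have hp : 0 < p := zero_lt_one.trans_le hp1
  have hD : 0 < D := hp.trans hpD
  have := Gamma_one_add_mul_one_sub_one_div_pos hD.le hp1
  have : 0 ≤ (p - 1) / (D - p) := div_nonneg (sub_nonneg.2 hp1) (sub_pos.2 hpD).le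
  unfold sobolevConstant
  positivity

lemma sobolevConstant_eq_of_holderConjugate {q : ℝ} (hpq : p.HolderConjugate q) (hpD : p < D) :
    sobolevConstant D p = D ^ (-1 / p) * (∫ r, (1 + r ^ q) ^ (-D) ∂radialMeasure D) ^ (-1 / D) *
      ((p - 1) / (D - p)) ^ (1 / q) := by
  have hq : 1 - 1 / p = 1 / q := by rw [one_div, one_div, hpq.one_sub_inv]
  rw [sobolevConstant, hq, mul_one_div, integral_one_add_rpow_rpow_neg_eq_Gamma hpq hpD]

lemma exists_tendsto_sobolevConstant_one (hD : 1 < D) : ∃ K : ℝ → ℝ,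
    Tendsto K (𝓝[>] 1) (𝓝 (sobolevConstant D 1)) ∧ ∀ᶠ p in 𝓝[>] 1, sobolevConstant D p ≤ K p := by
  have hD0 : 0 < D := zero_lt_one.trans hD
  have hGamma {x : ℝ} (hx : 0 < x) : ContinuousAt Gamma x :=
    (differentiableAt_Gamma fun m => by linarith [m.cast_nonneg (α := ℝ)]).continuousAt
  have hG₁ : ContinuousAt (fun p => Gamma (1 + D * (1 - 1 / p))) 1 :=
    ContinuousAt.comp (g := Gamma) (f := fun p => 1 + D * (1 - 1 / p))
      (hGamma (by norm_num)) (by fun_prop (disch := norm_num))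
  have hG₂ : ContinuousAt (fun p => Gamma (D / p)) 1 :=
    ContinuousAt.comp (g := Gamma) (f := fun p => D / p) (hGamma (by positivity))
      (by fun_prop (disch := norm_num))
  have hpow : ContinuousAt (fun p : ℝ => D ^ (-1 / p)) 1 :=
    continuousAt_const.rpow (by fun_prop (disch := norm_num)) (Or.inl hD0.ne')
  have hG0 : Gamma (1 + D * (1 - 1 / 1)) * Gamma (D / 1) / Gamma D ≠ 0 := by
    have := Gamma_pos_of_pos hD0
    norm_num [this.ne']
  have hK := (hpow.tendsto.mul (((hG₁.tendsto.mul hG₂).div_const (Gamma D)).rpow_const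
    (p := -1 / D) (Or.inl hG0))).mono_left (nhdsWithin_le_nhds (s := Ioi 1))
  refine ⟨fun p => D ^ (-1 / p) *
    (Gamma (1 + D * (1 - 1 / p)) * Gamma (D / p) / Gamma D) ^ (-1 / D), ?_, ?_⟩
  · simpa [sobolevConstant] using hK
  · filter_upwards [self_mem_nhdsWithin,
      nhdsWithin_le_nhds (gt_mem_nhds (show (1 : ℝ) < (1 + D) / 2 by linarith))]
      with p (hp1 : 1 < p) hpD
    have : 1 / p ≤ 1 := (div_le_one (zero_lt_one.trans hp1)).2 hp1.le
    have := Gamma_one_add_mul_one_sub_one_div_pos hD0.le hp1.le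
    refine mul_le_of_le_one_right (by positivity) (rpow_le_one ?_ ?_ (by linarith))
    · exact div_nonneg (by linarith) (by linarith)
    · rw [div_le_one (by linarith)]
      linarith

namespace IsHomogeneousLogConcave

variable {E : Type*} [NormedAddCommGroup E] [NormedSpace ℝ E] [MeasurableSpace E] [BorelSpace E]
  {μ : Measure E} {u : E → ℝ}

lemma integral_decreasingRearrangement_rpow_le (hμ : IsHomogeneousLogConcave μ D) (hp1 : 1 < p)
    (hpD : p < D) {v : E → ℝ} {L : ℝ≥0} (hv : LipschitzWith L v) (hs : HasCompactSupport v) :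
    (∫ r, decreasingRearrangement μ D v r ^ (D * p / (D - p)) ∂radialMeasure D) ^
        ((D - p) / (D * p)) ≤ sobolevConstant D p *
      (∫ r, |deriv (decreasingRearrangement μ D v) r| ^ p ∂radialMeasure D) ^ (1 / p) := by
  have hpq := Real.HolderConjugate.conjExponent hp1
  have := hpq.pos
  have hD := hμ.dim_pos
  have : 0 < D - p := sub_pos.2 hpD
  have hVa : ∀ r, volumeRadius μ D {x | 0 < v x} ≤ r → decreasingRearrangement μ D v r = 0 :=
    fun r hr => hμ.decreasingRearrangement_eq_zero hv.continuous hs hr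
  obtain ha | ha := (volumeRadius_nonneg μ D {x | 0 < v x}).eq_or_lt
  · rw [integral_eq_zero_of_ae, zero_rpow (by positivity)]
    · exact mul_nonneg (sobolevConstant_nonneg hp1.le hpD)
        (rpow_nonneg (integral_nonneg fun r => by positivity) _)
    · filter_upwards [ae_radialMeasure_pos D] with r hr
      rw [hVa r (ha.symm.trans_le hr.le), zero_rpow (by positivity), Pi.zero_apply]
  · rw [sobolevConstant_eq_of_holderConjugate hpq hpD]
    exact integral_rpow_le_mul_integral_abs_deriv_rpow hpq hpD
      (hμ.lipschitzWith_decreasingRearrangement hv hs) (decreasingRearrangement_nonneg μ D v) ha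
      (fun r hr => (hμ.lt_decreasingRearrangement_iff hv.continuous hs le_rfl).2
        (max_lt hr.2 ha)) hVa

lemma sobolev_of_one_lt (hμ : IsHomogeneousLogConcave μ D) (hp1 : 1 < p) (hpD : p < D)
    (hu : ContDiff ℝ 1 u) (hs : HasCompactSupport u) :
    (∫ x, |u x| ^ (D * p / (D - p)) ∂μ) ^ ((D - p) / (D * p)) ≤
      μ.real (Metric.ball 0 1) ^ (-1 / D) * sobolevConstant D p *
        (∫ x, ‖fderiv ℝ u x‖ ^ p ∂μ) ^ (1 / p) := by
  have : 0 < p := zero_lt_one.trans hp1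
  have hD := hμ.dim_pos
  have : 0 < D - p := sub_pos.2 hpD
  have hβ := hμ.measureReal_unitBall_pos
  have hK := sobolevConstant_nonneg hp1.le hpD
  obtain ⟨L, hL⟩ := exists_lipschitzWith_abs hu hs
  have hs' : HasCompactSupport fun x => |u x| := hs.comp_left abs_zero
  have hV := hμ.integral_decreasingRearrangement_rpow_le hp1 hpD hL hs'
  have hPS := hμ.integral_abs_deriv_decreasingRearrangement_rpow_le_integral_norm_fderiv_rpow
    hp1 hu hs
  rw [hμ.integral_rpow_decreasingRearrangement hL.continuous (fun x => abs_nonneg (u x)) hs'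
    (by positivity), mul_rpow hβ.le (integral_nonneg fun r =>
      rpow_nonneg (decreasingRearrangement_nonneg μ D _ r) _)]
  set V := decreasingRearrangement μ D fun x => |u x|
  have hexp : (D - p) / (D * p) = -1 / D + 1 / p := by
    field_simp
    ring
  calc _ ≤ μ.real (Metric.ball 0 1) ^ ((D - p) / (D * p)) *
        (sobolevConstant D p * (∫ r, |deriv V r| ^ p ∂radialMeasure D) ^ (1 / p)) := by gcongr
    _ = μ.real (Metric.ball 0 1) ^ (-1 / D) * sobolevConstant D p *
        (μ.real (Metric.ball 0 1) * ∫ r, |deriv V r| ^ p ∂radialMeasure D) ^ (1 / p) := by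
      rw [hexp, rpow_add hβ, mul_rpow hβ.le (integral_nonneg fun r => by positivity)]
      ring
    _ ≤ _ := by gcongr

lemma isFiniteMeasureOnCompacts (hμ : IsHomogeneousLogConcave μ D) :
    IsFiniteMeasureOnCompacts μ :=
  ⟨fun _ hK => hμ.measure_lt_top hK.isBounded⟩

lemma tendsto_integral_rpow (hμ : IsHomogeneousLogConcave μ D) {f : E → ℝ} (hf : Continuous f)
    (hs : HasCompactSupport f) {s : ℝ} (h0 : 0 < s) :
    Tendsto (fun t => ∫ x, f x ^ t ∂μ) (𝓝 s) (𝓝 (∫ x, f x ^ s ∂μ)) := by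
  have := hμ.isFiniteMeasureOnCompacts
  have hcont : ContinuousOn (fun t : ℝ => ∫ x, f x ^ t ∂μ) (Ioi 0) := by
    refine continuousOn_integral_of_compact_support hs ?_ fun t x ht hx => ?_
    · exact (hf.comp continuous_snd).continuousOn.rpow continuous_fst.continuousOn
        fun z hz => Or.inr hz.1
    · rw [image_eq_zero_of_notMem_tsupport hx, zero_rpow (ne_of_gt ht)]
  exact hcont.continuousAt (Ioi_mem_nhds h0)

lemma sobolev_one (hμ : IsHomogeneousLogConcave μ D) (hD : 1 < D) (hu : ContDiff ℝ 1 u)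
    (hs : HasCompactSupport u) :
    (∫ x, |u x| ^ (D * 1 / (D - 1)) ∂μ) ^ ((D - 1) / (D * 1)) ≤
      μ.real (Metric.ball 0 1) ^ (-1 / D) * sobolevConstant D 1 *
        (∫ x, ‖fderiv ℝ u x‖ ^ (1 : ℝ) ∂μ) ^ (1 / 1 : ℝ) := by
  obtain ⟨K, hK, hle⟩ := exists_tendsto_sobolevConstant_one hD
  have hD1 : 0 < D - 1 := sub_pos.2 hD
  have hD0 := hμ.dim_pos
  have hexp : ContinuousAt (fun p : ℝ => D * p / (D - p)) 1 := by
    fun_prop (disch := exact hD1.ne')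
  have hexp' : ContinuousAt (fun p : ℝ => (D - p) / (D * p)) 1 := by
    fun_prop (disch := simpa using hD0.ne')
  have hinv : ContinuousAt (fun p : ℝ => 1 / p) 1 := by fun_prop (disch := norm_num)
  have hleft := ((hμ.tendsto_integral_rpow hu.continuous.abs (hs.comp_left abs_zero)
    (by positivity)).comp hexp.tendsto).rpow hexp'.tendsto (Or.inr (by positivity))
  have hright := (hμ.tendsto_integral_rpow (hu.continuous_fderiv one_ne_zero).norm
    (hs.fderiv ℝ).norm one_pos).rpow hinv.tendsto (Or.inr (by positivity))
  refine le_of_tendsto_of_tendsto (hleft.mono_left (nhdsWithin_le_nhds (s := Ioi 1)))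
    ((hK.const_mul _).mul (hright.mono_left nhdsWithin_le_nhds)) ?_
  filter_upwards [self_mem_nhdsWithin, nhdsWithin_le_nhds (gt_mem_nhds hD), hle] with p hp hpD hpK
  refine (hμ.sobolev_of_one_lt hp hpD hu hs).trans ?_
  have : 0 ≤ ∫ x, ‖fderiv ℝ u x‖ ^ p ∂μ := integral_nonneg fun x => by positivity
  gcongr

theorem sobolev (hμ : IsHomogeneousLogConcave μ D) (hp1 : 1 ≤ p) (hpD : p < D)
    (hu : ContDiff ℝ 1 u) (hs : HasCompactSupport u) :
    (∫ x, |u x| ^ (D * p / (D - p)) ∂μ) ^ ((D - p) / (D * p)) ≤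
      μ.real (Metric.ball 0 1) ^ (-1 / D) * sobolevConstant D p *
        (∫ x, ‖fderiv ℝ u x‖ ^ p ∂μ) ^ (1 / p) := by
  obtain rfl | hp := hp1.eq_or_lt
  · exact hμ.sobolev_one hpD hu hs
  · exact hμ.sobolev_of_one_lt hp hpD hu hs

end IsHomogeneousLogConcave

end SharpSobolev

section GaussianIntegral

variable {E : Type*} [NormedAddCommGroup E] [NormedSpace ℝ E] [MeasurableSpace E] [BorelSpace E]
  {μ : Measure E} {D : ℝ}

namespace IsHomogeneousLogConcave

lemma map_norm (hμ : IsHomogeneousLogConcave μ D) :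
    μ.map norm = μ (Metric.ball 0 1) • radialMeasure D := by
  have hnorm (a : ℝ) : μ.map norm (Iio a) = μ (Metric.ball 0 a) := by
    rw [Measure.map_apply measurable_norm measurableSet_Iio]
    congr 1
    ext x
    exact mem_ball_zero_iff.symm
  have hIio (a : ℝ) :
      μ.map norm (Iio a) = (μ (Metric.ball 0 1) • radialMeasure D) (Iio a) := by
    rw [hnorm, Measure.smul_apply, smul_eq_mul]
    obtain ha | ha := le_or_gt a 0
    · have hzero : radialMeasure D (Iio a) = 0 := measure_mono_null (Iio_subset_Iio ha) (by
        rw [radialMeasure_Iio hμ.dim_pos le_rfl, zero_rpow hμ.dim_pos.ne', ENNReal.ofReal_zero])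
      rw [Metric.ball_eq_empty.2 ha, measure_empty, hzero, mul_zero]
    · rw [hμ.measure_ball ha, radialMeasure_Iio hμ.dim_pos ha.le, mul_comm]
  have hfin (a : ℝ) : μ.map norm (Iio a) ≠ ∞ := by
    rw [hnorm]
    exact (hμ.measure_lt_top Metric.isBounded_ball).ne
  refine Measure.ext_of_Ico' _ _
    (fun _ b _ => measure_ne_top_of_subset Ico_subset_Iio_self (hfin b)) fun a b hab => ?_
  rw [← Iio_sdiff_Iio, measure_sdiff (Iio_subset_Iio hab.le) measurableSet_Iio.nullMeasurableSet
    (hfin a), measure_sdiff (Iio_subset_Iio hab.le) measurableSet_Iio.nullMeasurableSet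
    (hIio a ▸ hfin a), hIio, hIio]

lemma integral_exp_neg_norm_sq (hμ : IsHomogeneousLogConcave μ D) :
    ∫ x, exp (-‖x‖ ^ (2 : ℝ)) ∂μ = μ.real (Metric.ball 0 1) * Gamma (1 + D / 2) := by
  have hD := hμ.dim_pos
  rw [← integral_map (φ := norm) (f := fun r : ℝ => exp (-r ^ (2 : ℝ)))
    measurable_norm.aemeasurable (Measurable.aestronglyMeasurable (by fun_prop)), hμ.map_norm,
    integral_smul_measure, smul_eq_mul, integral_radialMeasure hD, measureReal_def]
  simp_rw [mul_assoc]
  rw [integral_const_mul, integral_rpow_mul_exp_neg_rpow two_pos (by linarith), add_comm 1,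
    Gamma_add_one (by positivity), sub_add_cancel]
  ring

end IsHomogeneousLogConcave

end GaussianIntegral

section MonomialCone

lemma withDensity_addHaar_smul {E : Type*} [NormedAddCommGroup E] [NormedSpace ℝ E]
    [MeasurableSpace E] [BorelSpace E] [FiniteDimensional ℝ E] (μ : Measure E)
    [μ.IsAddHaarMeasure] {w : E → ℝ≥0∞} (hw : Measurable w) {a c : ℝ} (hc : 0 < c)
    (hwc : ∀ x, w (c • x) = ENNReal.ofReal (c ^ a) * w x) {S : Set E} (hS : MeasurableSet S) :
    μ.withDensity w (c • S) =
      ENNReal.ofReal (c ^ (Module.finrank ℝ E + a)) * μ.withDensity w S := by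
  have hcS : MeasurableSet (c • S) := hS.const_smul_of_ne_zero hc.ne'
  have hpre : (c • ·) ⁻¹' (c • S) = S := ext fun x => smul_mem_smul_set_iff₀ hc.ne' S x
  have hcd : 0 < c ^ Module.finrank ℝ E := pow_pos hc _
  have hmap := setLIntegral_map (μ := μ) hcS hw (measurable_const_smul c)
  rw [Measure.map_addHaar_smul μ hc.ne', Measure.restrict_smul, lintegral_smul_measure,
    smul_eq_mul, abs_of_pos (inv_pos.2 hcd), hpre] at hmap
  simp_rw [hwc] at hmap
  rw [lintegral_const_mul _ hw] at hmap
  rw [withDensity_apply _ hcS, withDensity_apply _ hS, rpow_add hc, rpow_natCast,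
    ENNReal.ofReal_mul hcd.le, mul_assoc, ← hmap, ← mul_assoc, ← ENNReal.ofReal_mul hcd.le,
    mul_inv_cancel₀ hcd.ne', ENNReal.ofReal_one, one_mul]

variable {ι : Type*} [Fintype ι] {A : ι → ℝ}

lemma isOpen_monSet (A : ι → ℝ) : IsOpen (monSet A) := by
  simp only [monSet, ofPred_forall]
  exact isOpen_iInter_of_finite fun i => isOpen_iInter_of_finite fun _ =>
    isOpen_lt continuous_const (by fun_prop)

lemma smul_mem_monSet_iff {c : ℝ} (hc : 0 < c) {x : EuclideanSpace ℝ ι} :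
    c • x ∈ monSet A ↔ x ∈ monSet A :=
  forall₂_congr fun _ _ => mul_pos_iff_of_pos_left hc

lemma add_mem_monSet {x y : EuclideanSpace ℝ ι} (hx : x ∈ monSet A) (hy : y ∈ monSet A) :
    x + y ∈ monSet A :=
  fun i hi => add_pos (hx i hi) (hy i hi)

lemma monWeight_nonneg (A : ι → ℝ) (x : EuclideanSpace ℝ ι) : 0 ≤ monWeight A x :=
  Finset.prod_nonneg fun _ _ => rpow_nonneg (abs_nonneg _) _

lemma continuous_monWeight (hA : ∀ i, 0 ≤ A i) : Continuous (monWeight A) :=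
  continuous_finsetProd _ fun i _ => Continuous.rpow_const (by fun_prop) fun _ => Or.inr (hA i)

lemma monWeight_pos (hA : ∀ i, 0 ≤ A i) {x : EuclideanSpace ℝ ι} (hx : x ∈ monSet A) :
    0 < monWeight A x := by
  refine Finset.prod_pos fun i _ => ?_
  obtain h | h := (hA i).eq_or_lt
  · rw [← h, rpow_zero]
    exact one_pos
  · exact rpow_pos_of_pos (abs_pos.2 (hx i h).ne') _

lemma monWeight_smul {c : ℝ} (hc : 0 < c) (x : EuclideanSpace ℝ ι) :
    monWeight A (c • x) = c ^ (∑ i, A i) * monWeight A x := by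
  rw [monWeight, monWeight, Real.rpow_sum_of_pos hc, ← Finset.prod_mul_distrib]
  refine Finset.prod_congr rfl fun i _ => ?_
  rw [PiLp.smul_apply, smul_eq_mul, abs_mul, abs_of_pos hc, mul_rpow hc.le (abs_nonneg _)]

lemma rpow_monWeight_mul_le (hA : ∀ i, 0 ≤ A i) {t : ℝ} (h0 : 0 < t) (h1 : t < 1)
    {x y : EuclideanSpace ℝ ι} (hx : x ∈ monSet A) (hy : y ∈ monSet A) :
    monWeight A x ^ (1 - t) * monWeight A y ^ t ≤ monWeight A ((1 - t) • x + t • y) := by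
  have ht : 0 < 1 - t := sub_pos.2 h1
  simp only [monWeight]
  rw [← Real.finsetProd_rpow _ _ fun i _ => by positivity,
    ← Real.finsetProd_rpow _ _ fun i _ => by positivity, ← Finset.prod_mul_distrib]
  refine Finset.prod_le_prod (fun i _ => by positivity) fun i _ => ?_
  obtain h | h := (hA i).eq_or_lt
  · simp only [← h, rpow_zero, one_rpow, mul_one, le_refl]
  have hxi := hx i h
  have hyi := hy i h
  simp only [PiLp.add_apply, PiLp.smul_apply, smul_eq_mul]
  rw [abs_of_pos hxi, abs_of_pos hyi, abs_of_pos (by positivity), ← rpow_mul hxi.le,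
    ← rpow_mul hyi.le, mul_comm (A i), mul_comm (A i), rpow_mul hxi.le, rpow_mul hyi.le,
    ← mul_rpow (by positivity) (by positivity)]
  exact rpow_le_rpow (by positivity) (geom_mean_le_arith_mean2_weighted ht.le h0.le hxi.le hyi.le
    (sub_add_cancel 1 t)) (hA i)

/-- The density of `x^A dx` on the cone `monSet A`, with values in `ℝ≥0∞` and extended by zero. -/
def monDensity (A : ι → ℝ) : EuclideanSpace ℝ ι → ℝ≥0∞ :=
  (monSet A).indicator fun x => ENNReal.ofReal (monWeight A x)

/-- The measure `x^A dx` on the cone `monSet A`, as a measure on the whole space. -/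
def monMeasure (A : ι → ℝ) : Measure (EuclideanSpace ℝ ι) :=
  volume.withDensity (monDensity A)

lemma measurable_monDensity (hA : ∀ i, 0 ≤ A i) : Measurable (monDensity A) :=
  (continuous_monWeight hA).measurable.ennreal_ofReal.indicator (isOpen_monSet A).measurableSet

lemma monDensity_smul {c : ℝ} (hc : 0 < c) (x : EuclideanSpace ℝ ι) :
    monDensity A (c • x) = ENNReal.ofReal (c ^ (∑ i, A i)) * monDensity A x := by
  by_cases hx : x ∈ monSet A
  · rw [monDensity, indicator_of_mem hx, indicator_of_mem ((smul_mem_monSet_iff hc).2 hx),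
      monWeight_smul hc, ENNReal.ofReal_mul (rpow_nonneg hc.le _)]
  · rw [monDensity, indicator_of_notMem hx, indicator_of_notMem (mt (smul_mem_monSet_iff hc).1 hx),
      mul_zero]

lemma rpow_monDensity_mul_le (hA : ∀ i, 0 ≤ A i) ⦃t : ℝ⦄ (h0 : 0 < t) (h1 : t < 1)
    (x y : EuclideanSpace ℝ ι) :
    monDensity A x ^ (1 - t) * monDensity A y ^ t ≤ monDensity A ((1 - t) • x + t • y) := by
  have ht : 0 < 1 - t := sub_pos.2 h1
  by_cases hx : x ∈ monSet A
  · by_cases hy : y ∈ monSet A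
    · rw [monDensity, indicator_of_mem hx, indicator_of_mem hy,
        indicator_of_mem (add_mem_monSet ((smul_mem_monSet_iff ht).2 hx)
          ((smul_mem_monSet_iff h0).2 hy)),
        ENNReal.ofReal_rpow_of_nonneg (monWeight_nonneg A x) ht.le,
        ENNReal.ofReal_rpow_of_nonneg (monWeight_nonneg A y) h0.le,
        ← ENNReal.ofReal_mul (rpow_nonneg (monWeight_nonneg A x) _)]
      exact ENNReal.ofReal_le_ofReal (rpow_monWeight_mul_le hA h0 h1 hx hy)
    · rw [monDensity, indicator_of_notMem hy, ENNReal.zero_rpow_of_pos h0, mul_zero]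
      exact zero_le
  · rw [monDensity, indicator_of_notMem hx, ENNReal.zero_rpow_of_pos ht, zero_mul]
    exact zero_le

lemma monMeasure_unitBall_pos (hA : ∀ i, 0 ≤ A i) : 0 < monMeasure A (Metric.ball 0 1) := by
  have hne : (Metric.ball (0 : EuclideanSpace ℝ ι) 1 ∩ monSet A).Nonempty := by
    set e : EuclideanSpace ℝ ι := WithLp.toLp 2 fun _ => 1
    have he : 0 < ‖e‖ + 1 := by positivity
    refine ⟨(‖e‖ + 1)⁻¹ • e, ?_, (smul_mem_monSet_iff (inv_pos.2 he)).2 fun _ _ => one_pos⟩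
    rw [mem_ball_zero_iff, norm_smul, norm_inv, Real.norm_of_nonneg he.le, inv_mul_lt_iff₀ he]
    linarith
  rw [monMeasure, withDensity_apply _ measurableSet_ball,
    setLIntegral_pos_iff (measurable_monDensity hA)]
  refine ((Metric.isOpen_ball.inter (isOpen_monSet A)).measure_pos volume hne).trans_le
    (measure_mono fun x hx => ⟨?_, hx.1⟩)
  rw [Function.mem_support, monDensity, indicator_of_mem hx.2]
  exact (ENNReal.ofReal_pos.2 (monWeight_pos hA hx.2)).ne'

lemma monMeasure_unitBall_lt_top (hA : ∀ i, 0 ≤ A i) :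
    monMeasure A (Metric.ball 0 1) < ∞ := by
  rw [monMeasure, monDensity, withDensity_indicator (isOpen_monSet A).measurableSet]
  have : IsLocallyFiniteMeasure ((volume.restrict (monSet A)).withDensity fun x =>
      ENNReal.ofReal (monWeight A x)) :=
    IsLocallyFiniteMeasure.withDensity_ofReal (continuous_monWeight hA)
  exact measure_ball_lt_top

theorem isHomogeneousLogConcave_monMeasure (hA : ∀ i, 0 ≤ A i) (hD : 0 < monDim A) :
    IsHomogeneousLogConcave (monMeasure A) (monDim A) where
  dim_pos := hD
  isLogConcave := (IsLogConcave.volume_innerProductSpace _).withDensity (measurable_monDensity hA)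
    (rpow_monDensity_mul_le hA)
  measure_smul _ hc _ hS := by
    rw [monDim, ← finrank_euclideanSpace (𝕜 := ℝ)]
    exact withDensity_addHaar_smul volume (measurable_monDensity hA) hc (monDensity_smul hc) hS
  measure_unitBall_pos := monMeasure_unitBall_pos hA
  measure_unitBall_lt_top := monMeasure_unitBall_lt_top hA

end MonomialCone

section Reflections

variable {ι : Type*} [Fintype ι] {A : ι → ℝ}

open scoped Classical in
/-- The reflection changing the sign of the coordinates in `s`. -/
def signFlip (s : Finset ι) : EuclideanSpace ℝ ι ≃ₗᵢ[ℝ] EuclideanSpace ℝ ι :=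
  LinearIsometryEquiv.piLpCongrRight 2 fun i =>
    if i ∈ s then LinearIsometryEquiv.neg ℝ else LinearIsometryEquiv.refl ℝ ℝ

lemma signFlip_apply_of_mem {s : Finset ι} {i : ι} (hi : i ∈ s) (x : EuclideanSpace ℝ ι) :
    signFlip s x i = -x i := by
  simp only [signFlip, LinearIsometryEquiv.piLpCongrRight_apply, if_pos hi]
  rfl

lemma signFlip_apply_of_notMem {s : Finset ι} {i : ι} (hi : i ∉ s) (x : EuclideanSpace ℝ ι) :
    signFlip s x i = x i := by
  simp only [signFlip, LinearIsometryEquiv.piLpCongrRight_apply, if_neg hi]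
  rfl

lemma abs_signFlip_apply (s : Finset ι) (x : EuclideanSpace ℝ ι) (i : ι) :
    |signFlip s x i| = |x i| := by
  by_cases hi : i ∈ s
  · rw [signFlip_apply_of_mem hi, abs_neg]
  · rw [signFlip_apply_of_notMem hi]

lemma signFlip_signFlip (s : Finset ι) (x : EuclideanSpace ℝ ι) :
    signFlip s (signFlip s x) = x := by
  ext i
  by_cases hi : i ∈ s
  · rw [signFlip_apply_of_mem hi, signFlip_apply_of_mem hi, neg_neg]
  · rw [signFlip_apply_of_notMem hi, signFlip_apply_of_notMem hi]

lemma monWeight_signFlip (s : Finset ι) (x : EuclideanSpace ℝ ι) :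
    monWeight A (signFlip s x) = monWeight A x :=
  Finset.prod_congr rfl fun i _ => by rw [abs_signFlip_apply]

lemma setIntegral_comp_signFlip (s : Finset ι) (F : EuclideanSpace ℝ ι → ℝ) :
    ∫ x in monSet A, F (signFlip s x) = ∫ x in signFlip s ⁻¹' monSet A, F x := by
  have hpre : signFlip s ⁻¹' (signFlip s ⁻¹' monSet A) = monSet A := by
    ext x
    rw [mem_preimage, mem_preimage, signFlip_signFlip]
  have hcomp := (signFlip s).measurePreserving.setIntegral_preimage_emb
    (signFlip s).toHomeomorph.measurableEmbedding F (signFlip s ⁻¹' monSet A)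
  rwa [hpre] at hcomp

lemma signFlip_mem_monSet_iff {x : EuclideanSpace ℝ ι} (hx : ∀ i, x i ≠ 0) {s : Finset ι}
    (hs : ∀ i ∈ s, 0 < A i) :
    signFlip s x ∈ monSet A ↔ s = ({i | 0 < A i ∧ x i < 0} : Finset ι) := by
  have hiff (i : ι) : 0 < signFlip s x i ↔ (i ∈ s ↔ x i < 0) := by
    by_cases hi : i ∈ s
    · rw [signFlip_apply_of_mem hi, neg_pos, iff_true_left hi]
    · rw [signFlip_apply_of_notMem hi, iff_false_left hi, not_lt, (hx i).symm.le_iff_lt]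
  rw [Finset.ext_iff]
  refine forall_congr' fun i => ?_
  rw [hiff, Finset.mem_filter_univ]
  have := hs i
  tauto

lemma ae_forall_coord_ne_zero : ∀ᵐ x : EuclideanSpace ℝ ι, ∀ i, x i ≠ 0 := by
  refine ae_all_iff.2 fun i => ?_
  have h : ∀ᵐ y : ι → ℝ, y i ≠ 0 := by
    rw [ae_iff]
    simpa only [not_not, volume_pi] using Measure.pi_hyperplane (fun _ => (volume : Measure ℝ)) i 0
  exact (PiLp.volume_preserving_ofLp ι).quasiMeasurePreserving.ae h

/-- Almost every point lies in exactly one reflected copy of the cone. -/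
lemma sum_setIntegral_signFlip {F : EuclideanSpace ℝ ι → ℝ} (hF : Integrable F) :
    ∑ s ∈ Finset.powerset {i | 0 < A i}, ∫ x in monSet A, F (signFlip s x) = ∫ x, F x := by
  have hm (s : Finset ι) : MeasurableSet (signFlip s ⁻¹' monSet A) :=
    (signFlip s).continuous.measurable (isOpen_monSet A).measurableSet
  simp_rw [setIntegral_comp_signFlip, ← integral_indicator (hm _)]
  rw [← integral_finsetSum _ fun s _ => hF.indicator (hm s)]
  refine integral_congr_ae ?_
  filter_upwards [ae_forall_coord_ne_zero] with x hx
  set s₀ : Finset ι := {i | 0 < A i ∧ x i < 0}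
  have hmem {s : Finset ι} (hs : s ∈ Finset.powerset {i | 0 < A i}) :
      x ∈ signFlip s ⁻¹' monSet A ↔ s = s₀ :=
    signFlip_mem_monSet_iff hx fun i hi =>
      (Finset.mem_filter_univ i).1 (Finset.mem_powerset.1 hs hi)
  have hs₀ : s₀ ∈ Finset.powerset {i | 0 < A i} :=
    Finset.mem_powerset.2 fun i hi =>
      (Finset.mem_filter_univ i).2 ((Finset.mem_filter_univ i).1 hi).1
  rw [Finset.sum_eq_single_of_mem s₀ hs₀ fun s hs hne =>
      indicator_of_notMem (mt (hmem hs).1 hne) F, indicator_of_mem ((hmem hs₀).2 rfl)]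

end Reflections

section UnitBall

variable {ι : Type*} [Fintype ι] {A : ι → ℝ}

lemma integral_monMeasure (hA : ∀ i, 0 ≤ A i) (f : EuclideanSpace ℝ ι → ℝ) :
    ∫ x, f x ∂monMeasure A = ∫ x in monSet A, monWeight A x * f x := by
  rw [monMeasure, monDensity, withDensity_indicator (isOpen_monSet A).measurableSet,
    integral_withDensity_eq_integral_toReal_smul
      (continuous_monWeight hA).measurable.ennreal_ofReal
      (Eventually.of_forall fun _ => ENNReal.ofReal_lt_top)]
  simp only [smul_eq_mul, ENNReal.toReal_ofReal (monWeight_nonneg A _)]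

lemma integral_rpow_abs_mul_exp_neg_sq {a : ℝ} (ha : -1 < a) :
    ∫ t : ℝ, |t| ^ a * exp (-t ^ (2 : ℝ)) = Gamma ((a + 1) / 2) := by
  have habs := integral_comp_abs (f := fun t : ℝ => t ^ a * exp (-t ^ (2 : ℝ)))
  simp only [rpow_two, sq_abs] at habs ⊢
  rw [habs]
  simp_rw [← rpow_two]
  rw [integral_rpow_mul_exp_neg_rpow two_pos ha]
  ring

lemma integral_monWeight_mul_exp_neg_norm_sq (hA : ∀ i, 0 ≤ A i) :
    ∫ x, monWeight A x * exp (-‖x‖ ^ (2 : ℝ)) = ∏ i, Gamma ((A i + 1) / 2) := by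
  have hprod (x : EuclideanSpace ℝ ι) : monWeight A x * exp (-‖x‖ ^ (2 : ℝ)) =
      ∏ i, |x i| ^ A i * exp (-x i ^ (2 : ℝ)) := by
    simp only [rpow_two]
    rw [monWeight, EuclideanSpace.real_norm_sq_eq, ← Finset.sum_neg_distrib, exp_sum,
      Finset.prod_mul_distrib]
  simp_rw [hprod]
  refine ((PiLp.volume_preserving_ofLp ι).integral_comp
    (MeasurableEquiv.toLp 2 (ι → ℝ)).symm.measurableEmbedding
    fun y : ι → ℝ => ∏ i, |y i| ^ A i * exp (-y i ^ (2 : ℝ))).trans ?_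
  rw [integral_fintype_prod_volume_eq_prod fun i t => |t| ^ A i * exp (-t ^ (2 : ℝ))]
  exact Finset.prod_congr rfl fun i _ =>
    integral_rpow_abs_mul_exp_neg_sq (neg_one_lt_zero.trans_le (hA i))

lemma prod_Gamma_pos (hA : ∀ i, 0 ≤ A i) : 0 < ∏ i, Gamma ((A i + 1) / 2) :=
  Finset.prod_pos fun i _ => Gamma_pos_of_pos (by linarith [hA i])

lemma integral_monMeasure_exp_neg_norm_sq (hA : ∀ i, 0 ≤ A i) :
    ∫ x, exp (-‖x‖ ^ (2 : ℝ)) ∂monMeasure A = (∏ i, Gamma ((A i + 1) / 2)) / 2 ^ monK A := by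
  have hint : Integrable fun x => monWeight A x * exp (-‖x‖ ^ (2 : ℝ)) := by
    refine not_imp_comm.1 integral_undef ?_
    rw [integral_monWeight_mul_exp_neg_norm_sq hA]
    exact (prod_Gamma_pos hA).ne'
  have hcard : ((Finset.powerset {i | 0 < A i}).card : ℝ) = 2 ^ monK A := by
    rw [Finset.card_powerset, Nat.cast_pow, Nat.cast_ofNat, monK, Nat.card_eq_fintype_card,
      Fintype.card_subtype]
  have hsum := sum_setIntegral_signFlip (A := A) hint
  simp only [monWeight_signFlip, LinearIsometryEquiv.norm_map, Finset.sum_const, nsmul_eq_mul,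
    hcard] at hsum
  rw [← integral_monWeight_mul_exp_neg_norm_sq hA, ← hsum, integral_monMeasure hA,
    mul_div_cancel_left₀ _ (by positivity)]

lemma measureReal_monMeasure_unitBall (hA : ∀ i, 0 ≤ A i) (hD : 0 < monDim A) :
    (monMeasure A).real (Metric.ball 0 1) =
      (∏ i, Gamma ((A i + 1) / 2)) / (2 ^ monK A * Gamma (1 + monDim A / 2)) := by
  have := Gamma_pos_of_pos (show 0 < 1 + monDim A / 2 by positivity)
  rw [← div_div, ← integral_monMeasure_exp_neg_norm_sq hA,
    (isHomogeneousLogConcave_monMeasure hA hD).integral_exp_neg_norm_sq,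
    mul_div_cancel_right₀ _ this.ne']

lemma monC1_eq (hA : ∀ i, 0 ≤ A i) (hD : 0 < monDim A) :
    monC1 A = (monDim A)⁻¹ * (monMeasure A).real (Metric.ball 0 1) ^ (-1 / monDim A) := by
  have := prod_Gamma_pos hA
  have := Gamma_pos_of_pos (show 0 < 1 + monDim A / 2 by positivity)
  rw [measureReal_monMeasure_unitBall hA hD, monC1, neg_div, rpow_neg (by positivity),
    ← inv_rpow (by positivity), inv_div]

lemma inv_mul_rpow_mul_rpow_eq_sobolevConstant {D p q : ℝ} (hpq : p.HolderConjugate q)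
    (hD : 0 < D) :
    D⁻¹ * D ^ (1 - 1 / p - 1 / D) * ((p - 1) / (D - p)) ^ (1 / q) *
      (q * Gamma D / (Gamma (D / p) * Gamma (D / q))) ^ (1 / D) = sobolevConstant D p := by
  have hq : 1 - 1 / p = 1 / q := by rw [one_div, one_div, hpq.one_sub_inv]
  have hDq : 0 < D / q := div_pos hD hpq.symm.pos
  have := Gamma_pos_of_pos hD
  have := Gamma_pos_of_pos (div_pos hD hpq.pos)
  have := Gamma_pos_of_pos hDq
  have := Gamma_pos_of_pos (add_pos one_pos hDq)
  set G := Gamma (1 + D / q) * Gamma (D / p) / Gamma D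
  have hG : 0 < G := by positivity
  have hGamma : q * Gamma D / (Gamma (D / p) * Gamma (D / q)) = D * G⁻¹ := by
    have := hpq.symm.pos
    simp only [G]
    rw [add_comm 1, Gamma_add_one hDq.ne']
    field_simp
  have hexp : D⁻¹ * D ^ (1 - 1 / p - 1 / D) * D ^ (1 / D) = D ^ (-1 / p) := by
    rw [← rpow_neg_one, ← rpow_add hD, ← rpow_add hD]
    ring_nf
  calc _ = D⁻¹ * D ^ (1 - 1 / p - 1 / D) * D ^ (1 / D) * G ^ (-1 / D) *
        ((p - 1) / (D - p)) ^ (1 / q) := by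
        rw [hGamma, mul_rpow hD.le (inv_nonneg.2 hG.le), inv_rpow hG.le, ← rpow_neg hG.le,
          ← neg_div]
        ring
    _ = _ := by rw [hexp, sobolevConstant, hq, mul_one_div]

theorem monCp_eq (hA : ∀ i, 0 ≤ A i) {p : ℝ} (hp1 : 1 ≤ p) (hD : 0 < monDim A) :
    monCp A p = (monMeasure A).real (Metric.ball 0 1) ^ (-1 / monDim A) *
      sobolevConstant (monDim A) p := by
  obtain rfl | hp1 := hp1.eq_or_lt
  · have := Gamma_pos_of_pos hD
    rw [monCp, if_pos rfl, monC1_eq hA hD, sobolevConstant]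
    norm_num [this.ne', rpow_neg_one, mul_comm]
  · have hpq := Real.HolderConjugate.conjExponent hp1
    rw [monCp, if_neg hp1.ne', ← hpq.conjugate_eq, monC1_eq hA hD,
      ← inv_mul_rpow_mul_rpow_eq_sobolevConstant hpq hD]
    ring

lemma monCp_nonneg (hA : ∀ i, 0 ≤ A i) {p : ℝ} (hp1 : 1 ≤ p) (hpD : p < monDim A) :
    0 ≤ monCp A p := by
  rw [monCp_eq hA hp1 (by linarith)]
  exact mul_nonneg (rpow_nonneg measureReal_nonneg _) (sobolevConstant_nonneg hp1 hpD)

end UnitBall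

section WholeSpace

lemma sum_rpow_le_rpow_sum {ι : Type*} {s : Finset ι} {b : ι → ℝ} (hb : ∀ i ∈ s, 0 ≤ b i) {r : ℝ}
    (hr : 1 ≤ r) : ∑ i ∈ s, b i ^ r ≤ (∑ i ∈ s, b i) ^ r := by
  have hr0 : 0 ≤ r - 1 := sub_nonneg.2 hr
  have hsplit {t : ℝ} (ht : 0 ≤ t) : t ^ r = t * t ^ (r - 1) := by
    rw [← rpow_one_add' ht (by linarith), add_sub_cancel]
  rw [hsplit (Finset.sum_nonneg hb), Finset.sum_mul]
  refine Finset.sum_le_sum fun i hi => ?_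
  rw [hsplit (hb i hi)]
  exact mul_le_mul_of_nonneg_left
    (rpow_le_rpow (hb i hi) (Finset.single_le_sum hb hi) hr0) (hb i hi)

lemma rpow_sum_le_mul_rpow_sum {ι : Type*} {s : Finset ι} {a b : ι → ℝ} (ha : ∀ i ∈ s, 0 ≤ a i)
    (hb : ∀ i ∈ s, 0 ≤ b i) {K p q : ℝ} (hK : 0 ≤ K) (hp : 0 < p) (hpq : p ≤ q)
    (h : ∀ i ∈ s, a i ^ q⁻¹ ≤ K * b i ^ p⁻¹) :
    (∑ i ∈ s, a i) ^ q⁻¹ ≤ K * (∑ i ∈ s, b i) ^ p⁻¹ := by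
  have hq : 0 < q := hp.trans_le hpq
  have hB : 0 ≤ ∑ i ∈ s, b i := Finset.sum_nonneg hb
  have hpow {t : ℝ} (ht : 0 ≤ t) : (K * t ^ p⁻¹) ^ q = K ^ q * t ^ (q / p) := by
    rw [mul_rpow hK (rpow_nonneg ht _), ← rpow_mul ht, inv_mul_eq_div]
  rw [rpow_inv_le_iff_of_pos (Finset.sum_nonneg ha) (mul_nonneg hK (rpow_nonneg hB _)) hq]
  calc ∑ i ∈ s, a i ≤ ∑ i ∈ s, K ^ q * b i ^ (q / p) := Finset.sum_le_sum fun i hi => by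
        rw [← hpow (hb i hi), ← rpow_inv_le_iff_of_pos (ha i hi)
          (mul_nonneg hK (rpow_nonneg (hb i hi) _)) hq]
        exact h i hi
    _ ≤ K ^ q * (∑ i ∈ s, b i) ^ (q / p) := by
        rw [← Finset.mul_sum]
        exact mul_le_mul_of_nonneg_left (sum_rpow_le_rpow_sum hb ((one_le_div hp).2 hpq))
          (rpow_nonneg hK _)
    _ = (K * (∑ i ∈ s, b i) ^ p⁻¹) ^ q := (hpow hB).symm

lemma norm_fderiv_comp_linearIsometryEquiv {E F G : Type*} [NormedAddCommGroup E] [NormedSpace ℝ E]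
    [NormedAddCommGroup F] [NormedSpace ℝ F] [NormedAddCommGroup G] [NormedSpace ℝ G] (u : F → G)
    (e : E ≃ₗᵢ[ℝ] F) (x : E) :
    ‖fderiv ℝ (u ∘ e) x‖ = ‖fderiv ℝ u (e x)‖ := by
  have hcomp : fderiv ℝ (u ∘ e) x = (fderiv ℝ u (e x)).comp (e : E →L[ℝ] F) :=
    e.toContinuousLinearEquiv.comp_right_fderiv
  rw [hcomp]
  exact ContinuousLinearMap.opNorm_comp_linearIsometryEquiv _ e

variable {ι : Type*} [Fintype ι] {A : ι → ℝ} {p : ℝ} {u : EuclideanSpace ℝ ι → ℝ}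

lemma integrable_monWeight_mul_rpow_norm (hA : ∀ i, 0 ≤ A i) {F : Type*} [NormedAddCommGroup F]
    {f : EuclideanSpace ℝ ι → F} (hf : Continuous f) (hs : HasCompactSupport f) {a : ℝ}
    (ha : 0 < a) : Integrable fun x => monWeight A x * ‖f x‖ ^ a := by
  have hcont : Continuous fun x => ‖f x‖ ^ a := hf.norm.rpow_const fun _ => Or.inr ha.le
  have hsupp : HasCompactSupport fun x => ‖f x‖ ^ a :=
    hs.comp_left (g := fun y => ‖y‖ ^ a) (by rw [norm_zero, zero_rpow ha.ne'])
  exact ((continuous_monWeight hA).mul hcont).integrable_of_hasCompactSupport hsupp.mul_left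

lemma sobolev_signFlip (hA : ∀ i, 0 ≤ A i) (hp1 : 1 ≤ p) (hpD : p < monDim A)
    (hu : ContDiff ℝ 1 u) (hs : HasCompactSupport u) (s : Finset ι) :
    (∫ x in monSet A, monWeight A (signFlip s x) *
          |u (signFlip s x)| ^ (monDim A * p / (monDim A - p))) ^
        ((monDim A - p) / (monDim A * p)) ≤
      monCp A p * (∫ x in monSet A, monWeight A (signFlip s x) *
        ‖fderiv ℝ u (signFlip s x)‖ ^ p) ^ (1 / p) := by
  have hD : 0 < monDim A := by linarith
  have hcone := (isHomogeneousLogConcave_monMeasure hA hD).sobolev hp1 hpD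
    (hu.comp (signFlip s).contDiff) (hs.comp_homeomorph (signFlip s).toHomeomorph)
  rw [← monCp_eq hA hp1 hD, integral_monMeasure hA, integral_monMeasure hA] at hcone
  simp only [norm_fderiv_comp_linearIsometryEquiv, Function.comp_apply] at hcone
  simpa only [monWeight_signFlip] using hcone

theorem sobolev_monomial_weight_whole_space_general (hA : ∀ i, 0 ≤ A i) (hp1 : 1 ≤ p)
    (hpD : p < monDim A) (hu : ContDiff ℝ 1 u) (hs : HasCompactSupport u) :
    (∫ x, monWeight A x * |u x| ^ (monDim A * p / (monDim A - p))) ^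
        ((monDim A - p) / (monDim A * p)) ≤
      monCp A p * (∫ x, monWeight A x * ‖fderiv ℝ u x‖ ^ p) ^ (1 / p) := by
  have hp : 0 < p := by linarith
  have hDp : 0 < monDim A - p := sub_pos.2 hpD
  have hle : p ≤ monDim A * p / (monDim A - p) := by
    rw [le_div_iff₀ hDp]
    nlinarith
  have hcone := sobolev_signFlip hA hp1 hpD hu hs
  have hnonneg (x : EuclideanSpace ℝ ι) {t : ℝ} (ht : 0 ≤ t) (a : ℝ) :
      0 ≤ monWeight A x * t ^ a := mul_nonneg (monWeight_nonneg A x) (rpow_nonneg ht a)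
  simp only [← Real.norm_eq_abs, ← inv_div (monDim A * p), one_div] at hcone ⊢
  rw [← sum_setIntegral_signFlip
      (integrable_monWeight_mul_rpow_norm hA hu.continuous hs (hp.trans_le hle)),
    ← sum_setIntegral_signFlip (integrable_monWeight_mul_rpow_norm hA
      (hu.continuous_fderiv one_ne_zero) (hs.fderiv ℝ) hp)]
  exact rpow_sum_le_mul_rpow_sum
    (fun s _ => integral_nonneg fun x => hnonneg _ (norm_nonneg _) _)
    (fun s _ => integral_nonneg fun x => hnonneg _ (norm_nonneg _) _)
    (monCp_nonneg hA hp1 hpD) hp hle fun s _ => hcone s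

lemma monCp_le_ite (hA : ∀ i, 0 ≤ A i) (hp1 : 1 ≤ p) (hpD : p < monDim A) :
    monCp A p ≤ if p < monDim A / 2 then 2 ^ (1 / monDim A) * monCp A p else monCp A p := by
  split_ifs
  · exact le_mul_of_one_le_left (monCp_nonneg hA hp1 hpD)
      (one_le_rpow one_le_two (one_div_nonneg.2 (by linarith)))
  · exact le_rfl

end WholeSpace

/-- the Sobolev inequality with monomial weights on the whole space `ℝ^n`. -/
theorem sobolev_monomial_weight_whole_space {n : ℕ} (A : Fin n → ℝ) (hA : ∀ i, 0 ≤ A i)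
    (p : ℝ) (hp1 : 1 ≤ p) (hpD : p < monDim A)
    (u : EuclideanSpace ℝ (Fin n) → ℝ) (hu : ContDiff ℝ 1 u) (hsupp : HasCompactSupport u) :
    (∫ x, monWeight A x * |u x| ^ (monDim A * p / (monDim A - p))) ^
        ((monDim A - p) / (monDim A * p)) ≤
      (if p < monDim A / 2 then 2 ^ (1 / monDim A) * monCp A p else monCp A p) *
        (∫ x, monWeight A x * ‖fderiv ℝ u x‖ ^ p) ^ (1 / p) := by
  exact (sobolev_monomial_weight_whole_space_general hA hp1 hpD hu hsupp).trans
    (mul_le_mul_of_nonneg_right (monCp_le_ite hA hp1 hpD) (rpow_nonneg (integral_nonneg fun x =>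
      mul_nonneg (monWeight_nonneg A x) (rpow_nonneg (norm_nonneg _) p)) _))
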